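/- If ((C*,R*,P*), (u₁*, u₂*)) is a minimizer of the optimal control problem, then there exist absolutely continuous multipliers (p₁, p₂, p₃) : [0,t_f] → ℝ³ satisfying, for almost all t ∈ [0, t_f], the adjoint system p₁' = λ₂(p₁-p₂) + γ(t)(p₁-p₃) + [p₃ - α₂p₁ - (1-α₂)p₂](β(t)+u₂*)P*(C*+P*)/N², p₂' = λ₁(p₂-p₁) + γ(t)(p₂-p₃) - [p₃ - α₂p₁ - (1-α₂)p₂](β(t)+u₂*)P*R*/N², p₃' = -κ₁ + [p₃ - α₁p₁ - (1-α₁)p₂]u₁* + [p₃ - α₂p₁ - (1-α₂)p₂](β(t)+u₂*)R*(C*+R*)/N² (with N = R*+C*+P*), the transversality conditions p₁(t_f) = p₂(t_f) = p₃(t_f) = 0, and such that the optimal controls satisfy u₁* = min{max{0, [p₃ - α₁p₁ - (1-α₁)p₂]P*/(2κ₂)}, u₁max} and u₂* = min{max{0, [p₃ - α₂p₁ - (1-α₂)p₂]P*R*/(2κ₃N)}, u₂max} almost everywhere on [0,t_f]. -/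

import Mathlib

/-!
The argument is a direct variational proof of the maximum principle. The right-hand sides of the
three state equations add up to zero, so the total population `N` keeps its initial value
`R0 + C0 + P0 > 0` along every solution (`conservation`); the division by `N` is therefore harmless
and the state system becomes polynomial in the states.

The adjoint system is linear with bounded coefficients and has a solution `p` with `p(t_f) = 0`
(`adjoint_exists`). Let `d` be the step from the optimal controls `u` to the controls given by the
projection formulas for this `p`. Both are admissible, hence so is `u + e d` for `0 ≤ e ≤ 1`, and
for small `e` these controls generate a solution that is `O(e)`-close to the optimal one
(`perturbed_solution`). Integrating by parts against `p` (`ibp`) removes the first-order effect of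
the change of state on the cost (`hamiltonian_expansion`), which leaves
`J(u + e d) - J(u) ≤ e ∫ [(2 κ₂ u₁ - S₁ P) d₁ + (2 κ₃ u₂ - S₂ P R / N) d₂] + O(e²)`, where
`Sᵢ = p₃ - αᵢ p₁ - (1 - αᵢ) p₂`. Because `d` points to a projection, the bracket is at most
`-2 κ₂ d₁² - 2 κ₃ d₂²` (`projection_ineq`). By minimality the left side is nonnegative; dividing by
`e` and letting `e → 0` yields `∫ (2 κ₂ d₁² + 2 κ₃ d₂²) ≤ 0`, so `d = 0` almost everywhere (`core`).

Existence for the perturbed and adjoint systems, and the `O(e)` estimate, both rest on a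
contraction argument for Carathéodory equations in a weighted sup norm (`caratheodory`).
-/

open Set MeasureTheory

/-- Right-hand side of the `R` equation of the controlled system. -/
noncomputable def rhsR (lam1 lam2 a1 a2 : ℝ) (beta gam u1 u2 R C P : ℝ → ℝ) (s : ℝ) : ℝ :=
  -lam2 * R s + lam1 * C s - gam s * R s + a1 * u1 s * P s
    + a2 * (beta s + u2 s) * P s * R s / (R s + C s + P s)

/-- Right-hand side of the `C` equation of the controlled system. -/
noncomputable def rhsC (lam1 lam2 a1 a2 : ℝ) (beta gam u1 u2 R C P : ℝ → ℝ) (s : ℝ) : ℝ :=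
  -lam1 * C s + lam2 * R s - gam s * C s
    + (1 - a2) * (beta s + u2 s) * P s * R s / (R s + C s + P s)
    + (1 - a1) * u1 s * P s

/-- Right-hand side of the `P` equation of the controlled system. -/
noncomputable def rhsP (lam1 lam2 a1 a2 : ℝ) (beta gam u1 u2 R C P : ℝ → ℝ) (s : ℝ) : ℝ :=
  -(beta s + u2 s) * P s * R s / (R s + C s + P s) - u1 s * P s + gam s * (R s + C s)

/-- `(R, C, P)` is an absolutely continuous (Carathéodory) solution of the controlled
system on `[0, t_f]`: the states are continuous on `[0, t_f]` and satisfy the integral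
form of the equations (equivalently, the state equations hold almost everywhere). -/
noncomputable def IsSolution (t_f lam1 lam2 a1 a2 : ℝ) (beta gam u1 u2 R C P : ℝ → ℝ) : Prop :=
  ContinuousOn R (Icc 0 t_f) ∧ ContinuousOn C (Icc 0 t_f) ∧ ContinuousOn P (Icc 0 t_f) ∧
  (∀ t ∈ Icc (0:ℝ) t_f,
    R t = R 0 + ∫ s in (0:ℝ)..t, rhsR lam1 lam2 a1 a2 beta gam u1 u2 R C P s) ∧
  (∀ t ∈ Icc (0:ℝ) t_f,
    C t = C 0 + ∫ s in (0:ℝ)..t, rhsC lam1 lam2 a1 a2 beta gam u1 u2 R C P s) ∧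
  (∀ t ∈ Icc (0:ℝ) t_f,
    P t = P 0 + ∫ s in (0:ℝ)..t, rhsP lam1 lam2 a1 a2 beta gam u1 u2 R C P s)

/-- A feasible pair of the optimal control problem: measurable controls with values in
`[0,u₁max] × [0,u₂max]` on `[0,t_f]` together with a corresponding absolutely continuous
solution of the state equations with the prescribed initial conditions. -/
noncomputable def Feasible (t_f lam1 lam2 a1 a2 u1max u2max R0 C0 P0 : ℝ)
    (beta gam u1 u2 R C P : ℝ → ℝ) : Prop :=
  Measurable u1 ∧ Measurable u2 ∧
  (∀ t ∈ Icc (0:ℝ) t_f, u1 t ∈ Icc 0 u1max) ∧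
  (∀ t ∈ Icc (0:ℝ) t_f, u2 t ∈ Icc 0 u2max) ∧
  IsSolution t_f lam1 lam2 a1 a2 beta gam u1 u2 R C P ∧
  R 0 = R0 ∧ C 0 = C0 ∧ P 0 = P0

/-- The cost functional `J(P,u₁,u₂) = ∫₀^{t_f} κ₁P + κ₂u₁² + κ₃u₂² dt`. -/
noncomputable def cost (t_f k1 k2 k3 : ℝ) (P u1 u2 : ℝ → ℝ) : ℝ :=
  ∫ t in (0:ℝ)..t_f, (k1 * P t + k2 * u1 t ^ 2 + k3 * u2 t ^ 2)

/-- Right-hand side of the adjoint equation for `p₁`. -/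
noncomputable def adj1 (lam1 lam2 a1 a2 k1 : ℝ) (beta gam u1 u2 R C P p1 p2 p3 : ℝ → ℝ)
    (s : ℝ) : ℝ :=
  lam2 * (p1 s - p2 s) + gam s * (p1 s - p3 s)
    + (p3 s - a2 * p1 s - (1 - a2) * p2 s) * (beta s + u2 s) * P s * (C s + P s)
      / (R s + C s + P s) ^ 2

/-- Right-hand side of the adjoint equation for `p₂`. -/
noncomputable def adj2 (lam1 lam2 a1 a2 k1 : ℝ) (beta gam u1 u2 R C P p1 p2 p3 : ℝ → ℝ)
    (s : ℝ) : ℝ :=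
  lam1 * (p2 s - p1 s) + gam s * (p2 s - p3 s)
    - (p3 s - a2 * p1 s - (1 - a2) * p2 s) * (beta s + u2 s) * P s * R s
      / (R s + C s + P s) ^ 2

/-- Right-hand side of the adjoint equation for `p₃`. -/
noncomputable def adj3 (lam1 lam2 a1 a2 k1 : ℝ) (beta gam u1 u2 R C P p1 p2 p3 : ℝ → ℝ)
    (s : ℝ) : ℝ :=
  -k1 + (p3 s - a1 * p1 s - (1 - a1) * p2 s) * u1 s
    + (p3 s - a2 * p1 s - (1 - a2) * p2 s) * (beta s + u2 s) * R s * (C s + R s)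
      / (R s + C s + P s) ^ 2

/-! ### Locally bounded measurable functions -/

/-- Measurable and bounded on every compact interval. This class contains the continuous functions
and the admissible controls and is closed under the ring operations, so every integrand below is
interval integrable by `fun_prop`. -/
@[fun_prop]
def LB (f : ℝ → ℝ) : Prop :=
  Measurable f ∧ ∀ a b : ℝ, ∃ K : ℝ, ∀ t ∈ uIcc a b, |f t| ≤ K

namespace LB

lemma of_continuous {f : ℝ → ℝ} (hf : Continuous f) : LB f := by
  refine ⟨hf.measurable, fun a b => ?_⟩
  obtain ⟨K, hK⟩ := isCompact_uIcc.exists_bound_of_continuousOn (s := uIcc a b) hf.continuousOn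
  exact ⟨K, fun t ht => by simpa using hK t ht⟩

lemma of_bounded {f : ℝ → ℝ} (hf : Measurable f) {K : ℝ} (hK : ∀ t, |f t| ≤ K) : LB f :=
  ⟨hf, fun _ _ => ⟨K, fun t _ => hK t⟩⟩

@[fun_prop]
lemma const (c : ℝ) : LB (fun _ => c) := of_continuous continuous_const

@[fun_prop]
lemma add {f g : ℝ → ℝ} (hf : LB f) (hg : LB g) : LB (fun t => f t + g t) := by
  refine ⟨hf.1.add hg.1, fun a b => ?_⟩
  obtain ⟨K, hK⟩ := hf.2 a b
  obtain ⟨K', hK'⟩ := hg.2 a b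
  exact ⟨K + K', fun t ht => (abs_add_le _ _).trans (add_le_add (hK t ht) (hK' t ht))⟩

@[fun_prop]
lemma mul {f g : ℝ → ℝ} (hf : LB f) (hg : LB g) : LB (fun t => f t * g t) := by
  refine ⟨hf.1.mul hg.1, fun a b => ?_⟩
  obtain ⟨K, hK⟩ := hf.2 a b
  obtain ⟨K', hK'⟩ := hg.2 a b
  refine ⟨K * K', fun t ht => ?_⟩
  rw [abs_mul]
  exact mul_le_mul (hK t ht) (hK' t ht) (abs_nonneg _) ((abs_nonneg _).trans (hK t ht))

@[fun_prop]
lemma neg {f : ℝ → ℝ} (hf : LB f) : LB (fun t => -f t) := by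
  simpa using (const (-1)).mul hf

@[fun_prop]
lemma sub {f g : ℝ → ℝ} (hf : LB f) (hg : LB g) : LB (fun t => f t - g t) := by
  simpa [sub_eq_add_neg] using hf.add hg.neg

@[fun_prop]
lemma div_const {f : ℝ → ℝ} (hf : LB f) (c : ℝ) : LB (fun t => f t / c) := by
  simpa [div_eq_mul_inv] using hf.mul (const c⁻¹)

@[fun_prop]
lemma pow {f : ℝ → ℝ} (hf : LB f) (n : ℕ) : LB (fun t => f t ^ n) := by
  induction n with
  | zero => simpa using const 1
  | succ k ih => simpa [pow_succ] using ih.mul hf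

lemma intervalIntegrable {f : ℝ → ℝ} (hf : LB f) (a b : ℝ) :
    IntervalIntegrable f volume a b := by
  obtain ⟨K, hK⟩ := hf.2 a b
  refine (intervalIntegrable_const (c := K)).mono_fun hf.1.aestronglyMeasurable ?_
  refine (ae_restrict_iff' measurableSet_uIoc).2 (Filter.Eventually.of_forall fun t ht => ?_)
  have := hK t (uIoc_subset_uIcc ht)
  simpa using this.trans (le_abs_self K)

lemma comp_sub {f : ℝ → ℝ} (hf : LB f) (T : ℝ) : LB (fun t => f (T - t)) := by
  refine ⟨hf.1.comp (measurable_const.sub measurable_id), fun a b => ?_⟩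
  obtain ⟨K, hK⟩ := hf.2 (T - a) (T - b)
  refine ⟨K, fun t ht => hK _ ?_⟩
  rw [← image_const_sub_uIcc]
  exact ⟨t, ht, rfl⟩

end LB

/-! ### Carathéodory differential equations and integration by parts -/

/-- Global existence for `x' = f(t, x)` with `f` integrable along continuous curves and globally
Lipschitz in `x`, together with stability: an approximate solution with defect at most `d` stays
within a constant times `d` of the solution. Both come from the Picard map, which is
`1/2`-contracting for the sup norm weighted by `exp (-2 L t)`. -/
theorem caratheodory {E : Type*} [NormedAddCommGroup E] [NormedSpace ℝ E] [CompleteSpace E]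
    {T L : ℝ} (hT : 0 ≤ T) (hL : 0 < L) (f : ℝ → E → E) (x0 : E)
    (hfint : ∀ z : ℝ → E, Continuous z → ∀ a b, IntervalIntegrable (fun s => f s (z s)) volume a b)
    (hlip : ∀ s x y, ‖f s x - f s y‖ ≤ L * ‖x - y‖) :
    ∃ x : ℝ → E, Continuous x ∧ (∀ t ∈ Icc 0 T, x t = x0 + ∫ s in (0:ℝ)..t, f s (x s)) ∧
      ∀ z : ℝ → E, Continuous z → ∀ d : ℝ, 0 ≤ d →
        (∀ t ∈ Icc 0 T, ‖z t - (x0 + ∫ s in (0:ℝ)..t, f s (z s))‖ ≤ d) →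
        ∀ t ∈ Icc 0 T, ‖x t - z t‖ ≤ 2 * Real.exp (2 * L * T) * d := by
  -- the continuous function on `ℝ` represented by a point of the weighted space
  let ext : C(Icc (0:ℝ) T, E) → ℝ → E := fun y s =>
    Real.exp (2 * L * s) • y (projIcc 0 T hT s)
  have hext : ∀ y, Continuous (ext y) := fun y => by
    have : Continuous (projIcc 0 T hT) := continuous_projIcc
    fun_prop
  let Φ : C(Icc (0:ℝ) T, E) → C(Icc (0:ℝ) T, E) := fun y =>
    ⟨fun t => Real.exp (-(2 * L * t)) • (x0 + ∫ s in (0:ℝ)..t, f s (ext y s)), by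
      have h1 : Continuous fun t : ℝ => ∫ s in (0:ℝ)..t, f s (ext y s) :=
        intervalIntegral.continuous_primitive (fun a b => hfint _ (hext y) a b) 0
      fun_prop⟩
  have hΦ : ∀ y z, dist (Φ y) (Φ z) ≤ (1 / 2 : ℝ) * dist y z := by
    intro y z
    rw [ContinuousMap.dist_le (by positivity)]
    intro t
    have ht := t.2
    rw [dist_eq_norm]
    have e1 : Φ y t - Φ z t = Real.exp (-(2 * L * t)) •
        ∫ s in (0:ℝ)..t, (f s (ext y s) - f s (ext z s)) := by
      rw [intervalIntegral.integral_sub (hfint _ (hext y) _ _) (hfint _ (hext z) _ _)]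
      simp only [Φ, ContinuousMap.coe_mk, ← smul_sub, add_sub_add_left_eq_sub]
    have e2 : ‖∫ s in (0:ℝ)..t, (f s (ext y s) - f s (ext z s))‖ ≤
        ∫ s in (0:ℝ)..t, L * dist y z * Real.exp (2 * L * s) := by
      refine intervalIntegral.norm_integral_le_of_norm_le ht.1
        (Filter.Eventually.of_forall fun s _ => ?_)
        (Continuous.intervalIntegrable (by fun_prop) _ _)
      refine (hlip _ _ _).trans ?_
      rw [mul_assoc]
      refine mul_le_mul_of_nonneg_left ?_ hL.le
      simp only [ext, ← smul_sub, norm_smul, Real.norm_eq_abs, Real.abs_exp]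
      rw [mul_comm, ← dist_eq_norm]
      exact mul_le_mul_of_nonneg_right (ContinuousMap.dist_apply_le_dist _) (Real.exp_pos _).le
    have e3 : ∫ s in (0:ℝ)..t, L * dist y z * Real.exp (2 * L * s) =
        1 / 2 * dist y z * (Real.exp (2 * L * t) - 1) := by
      rw [intervalIntegral.integral_const_mul]
      have := intervalIntegral.integral_comp_mul_left (a := (0:ℝ)) (b := (t:ℝ)) Real.exp
        (c := 2 * L) (by positivity)
      rw [this, integral_exp]
      simp
      field_simp
    rw [e1, norm_smul, Real.norm_eq_abs, Real.abs_exp]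
    calc _ ≤ Real.exp (-(2 * L * t)) * (1 / 2 * dist y z * (Real.exp (2 * L * t) - 1)) :=
          mul_le_mul_of_nonneg_left (e2.trans_eq e3) (Real.exp_pos _).le
      _ ≤ Real.exp (-(2 * L * t)) * (1 / 2 * dist y z * Real.exp (2 * L * t)) := by
          gcongr; linarith
      _ = 1 / 2 * dist y z := by
          rw [mul_comm, mul_assoc, ← Real.exp_add]; simp
  have hc : ContractingWith (1 / 2 : NNReal) Φ := by
    refine ⟨by rw [← NNReal.coe_lt_coe]; norm_num, LipschitzWith.of_dist_le_mul fun y z => ?_⟩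
    simpa using hΦ y z
  have hN : Nonempty C(Icc (0:ℝ) T, E) := ⟨0⟩
  let y := ContractingWith.fixedPoint Φ hc
  have hy : Φ y = y := hc.fixedPoint_isFixedPt
  refine ⟨ext y, hext y, ?_, ?_⟩
  · intro t ht
    have : y ⟨t, ht⟩ = Φ y ⟨t, ht⟩ := by rw [hy]
    simp only [ext, projIcc_of_mem hT ht]
    rw [this]
    simp only [Φ, ContinuousMap.coe_mk, smul_smul, ← Real.exp_add]
    simp [ext]
  · intro z hz d hd hres t ht
    let w : C(Icc (0:ℝ) T, E) := ⟨fun t => Real.exp (-(2 * L * t)) • z t, by fun_prop⟩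
    have hw : ∀ s ∈ Icc 0 T, ext w s = z s := by
      intro s hs
      simp [ext, w, projIcc_of_mem hT hs, smul_smul, ← Real.exp_add]
    have h1 : dist w (Φ w) ≤ d := by
      rw [ContinuousMap.dist_le hd]
      intro s
      have : ∫ r in (0:ℝ)..s, f r (ext w r) = ∫ r in (0:ℝ)..s, f r (z r) := by
        refine intervalIntegral.integral_congr fun r hr => ?_
        rw [uIcc_of_le s.2.1] at hr
        rw [hw r ⟨hr.1, hr.2.trans s.2.2⟩]
      simp only [dist_eq_norm, w, Φ, ContinuousMap.coe_mk, ← smul_sub]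
      rw [this, norm_smul, Real.norm_eq_abs, Real.abs_exp]
      refine (mul_le_of_le_one_left (norm_nonneg _) ?_).trans (hres s s.2)
      rw [Real.exp_le_one_iff]
      have := s.2.1
      simp only [Left.neg_nonpos_iff]; positivity
    have h2 : dist w y ≤ d / (1 - (1 / 2 : NNReal)) :=
      (hc.dist_fixedPoint_le w).trans (by gcongr; norm_num)
    have h3 : dist (y ⟨t, ht⟩) (w ⟨t, ht⟩) ≤ 2 * d := by
      rw [dist_comm]
      refine (ContinuousMap.dist_apply_le_dist _).trans (h2.trans_eq ?_)
      norm_num; ring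
    rw [← hw t ht]
    simp only [ext, projIcc_of_mem hT ht, ← smul_sub]
    rw [norm_smul, Real.norm_eq_abs, Real.abs_exp, ← dist_eq_norm]
    calc _ ≤ Real.exp (2 * L * T) * (2 * d) := by
          gcongr
          exact ht.2
      _ = _ := by ring

/-- Integration by parts for the absolutely continuous functions `X`, `p` with `X' = a`, `p' = b`,
`X 0 = 0` and `p T = 0`. -/
theorem ibp {T : ℝ} (hT : 0 ≤ T) {a b X p : ℝ → ℝ} (ha : IntervalIntegrable a volume 0 T)
    (hb : IntervalIntegrable b volume 0 T)
    (hX : ∀ t ∈ Icc 0 T, X t = ∫ s in (0:ℝ)..t, a s)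
    (hp : ∀ t ∈ Icc 0 T, p t = -∫ s in t..T, b s) :
    ∫ s in (0:ℝ)..T, (b s * X s + p s * a s) = 0 := by
  have acX := ha.absolutelyContinuousOnInterval_intervalIntegral (c := 0) (by simp)
  have acp := hb.absolutelyContinuousOnInterval_intervalIntegral (c := T) (by simp)
  have := acp.integral_deriv_mul_eq_sub acX
  simp only [intervalIntegral.integral_same, zero_mul, mul_zero, sub_zero] at this
  refine Eq.trans ?_ this
  refine intervalIntegral.integral_congr_ae ?_
  filter_upwards [ha.ae_hasDerivAt_integral, hb.ae_hasDerivAt_integral] with s h1 h2 hs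
  have hs' := uIoc_subset_uIcc hs
  rw [(h1 hs' 0 (by simp)).deriv, (h2 hs' T (by simp)).deriv]
  rw [uIcc_of_le hT] at hs'
  rw [hX s hs', hp s hs', intervalIntegral.integral_symm s T]

/-- `caratheodory` for three scalar equations. -/
theorem picard3 {T L : ℝ} (hT : 0 ≤ T) (hL : 0 < L) (F G H : ℝ → ℝ → ℝ → ℝ → ℝ) (x0 y0 z0 : ℝ)
    (hF : ∀ x y z : ℝ → ℝ, Continuous x → Continuous y → Continuous z →
      LB (fun s => F s (x s) (y s) (z s)))
    (hG : ∀ x y z : ℝ → ℝ, Continuous x → Continuous y → Continuous z →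
      LB (fun s => G s (x s) (y s) (z s)))
    (hH : ∀ x y z : ℝ → ℝ, Continuous x → Continuous y → Continuous z →
      LB (fun s => H s (x s) (y s) (z s)))
    (lF : ∀ s x y z x' y' z', |F s x y z - F s x' y' z'| ≤ L * (|x - x'| + |y - y'| + |z - z'|))
    (lG : ∀ s x y z x' y' z', |G s x y z - G s x' y' z'| ≤ L * (|x - x'| + |y - y'| + |z - z'|))
    (lH : ∀ s x y z x' y' z', |H s x y z - H s x' y' z'| ≤ L * (|x - x'| + |y - y'| + |z - z'|)) :
    ∃ x y z : ℝ → ℝ, Continuous x ∧ Continuous y ∧ Continuous z ∧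
      (∀ t ∈ Icc 0 T, x t = x0 + ∫ s in (0:ℝ)..t, F s (x s) (y s) (z s)) ∧
      (∀ t ∈ Icc 0 T, y t = y0 + ∫ s in (0:ℝ)..t, G s (x s) (y s) (z s)) ∧
      (∀ t ∈ Icc 0 T, z t = z0 + ∫ s in (0:ℝ)..t, H s (x s) (y s) (z s)) ∧
      ∀ x' y' z' : ℝ → ℝ, Continuous x' → Continuous y' → Continuous z' → ∀ d : ℝ, 0 ≤ d →
        (∀ t ∈ Icc 0 T, |x' t - (x0 + ∫ s in (0:ℝ)..t, F s (x' s) (y' s) (z' s))| ≤ d) →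
        (∀ t ∈ Icc 0 T, |y' t - (y0 + ∫ s in (0:ℝ)..t, G s (x' s) (y' s) (z' s))| ≤ d) →
        (∀ t ∈ Icc 0 T, |z' t - (z0 + ∫ s in (0:ℝ)..t, H s (x' s) (y' s) (z' s))| ≤ d) →
        ∀ t ∈ Icc 0 T, |x t - x' t| ≤ 2 * Real.exp (2 * (3 * L) * T) * d ∧
          |y t - y' t| ≤ 2 * Real.exp (2 * (3 * L) * T) * d ∧
          |z t - z' t| ≤ 2 * Real.exp (2 * (3 * L) * T) * d := by
  let V : ℝ → ℝ × ℝ × ℝ → ℝ × ℝ × ℝ := fun s q =>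
    (F s q.1 q.2.1 q.2.2, G s q.1 q.2.1 q.2.2, H s q.1 q.2.1 q.2.2)
  have hV : ∀ q : ℝ → ℝ × ℝ × ℝ, Continuous q → ∀ a b,
      IntervalIntegrable (fun s => V s (q s)) volume a b := by
    intro q hq a b
    have c1 : Continuous fun s => (q s).1 := by fun_prop
    have c2 : Continuous fun s => (q s).2.1 := by fun_prop
    have c3 : Continuous fun s => (q s).2.2 := by fun_prop
    have i1 := (hF _ _ _ c1 c2 c3).intervalIntegrable a b
    have i2 := (hG _ _ _ c1 c2 c3).intervalIntegrable a b
    have i3 := (hH _ _ _ c1 c2 c3).intervalIntegrable a b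
    exact ⟨i1.1.prodMk (i2.1.prodMk i3.1), i1.2.prodMk (i2.2.prodMk i3.2)⟩
  have hl : ∀ s q q', ‖V s q - V s q'‖ ≤ 3 * L * ‖q - q'‖ := by
    intro s q q'
    have n1 : |q.1 - q'.1| ≤ ‖q - q'‖ := norm_fst_le (q - q')
    have n2 : |q.2.1 - q'.2.1| ≤ ‖q - q'‖ := (norm_fst_le (q - q').2).trans (norm_snd_le _)
    have n3 : |q.2.2 - q'.2.2| ≤ ‖q - q'‖ := (norm_snd_le (q - q').2).trans (norm_snd_le _)
    have key : L * (|q.1 - q'.1| + |q.2.1 - q'.2.1| + |q.2.2 - q'.2.2|) ≤ 3 * L * ‖q - q'‖ := by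
      nlinarith
    refine norm_prod_le_iff.2 ⟨(lF _ _ _ _ _ _ _).trans key, norm_prod_le_iff.2
      ⟨(lG _ _ _ _ _ _ _).trans key, (lH _ _ _ _ _ _ _).trans key⟩⟩
  have p1 : ∀ q : ℝ → ℝ × ℝ × ℝ, Continuous q → ∀ t, (∫ s in (0:ℝ)..t, V s (q s)).1
      = ∫ s in (0:ℝ)..t, F s (q s).1 (q s).2.1 (q s).2.2 := fun q hq t =>
    ((ContinuousLinearMap.fst ℝ ℝ (ℝ × ℝ)).intervalIntegral_comp_comm (hV q hq 0 t)).symm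
  have p2 : ∀ q : ℝ → ℝ × ℝ × ℝ, Continuous q → ∀ t, (∫ s in (0:ℝ)..t, V s (q s)).2.1
      = ∫ s in (0:ℝ)..t, G s (q s).1 (q s).2.1 (q s).2.2 := fun q hq t =>
    (((ContinuousLinearMap.fst ℝ ℝ ℝ).comp
      (ContinuousLinearMap.snd ℝ ℝ (ℝ × ℝ))).intervalIntegral_comp_comm (hV q hq 0 t)).symm
  have p3 : ∀ q : ℝ → ℝ × ℝ × ℝ, Continuous q → ∀ t, (∫ s in (0:ℝ)..t, V s (q s)).2.2
      = ∫ s in (0:ℝ)..t, H s (q s).1 (q s).2.1 (q s).2.2 := fun q hq t =>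
    (((ContinuousLinearMap.snd ℝ ℝ ℝ).comp
      (ContinuousLinearMap.snd ℝ ℝ (ℝ × ℝ))).intervalIntegral_comp_comm (hV q hq 0 t)).symm
  obtain ⟨q, hq, heq, hst⟩ := caratheodory hT (by positivity : 0 < 3 * L) V (x0, y0, z0) hV hl
  refine ⟨fun t => (q t).1, fun t => (q t).2.1, fun t => (q t).2.2, by fun_prop, by fun_prop,
    by fun_prop, fun t ht => ?_, fun t ht => ?_, fun t ht => ?_, ?_⟩
  · rw [← p1 q hq t]; exact congrArg Prod.fst (heq t ht)
  · rw [← p2 q hq t]; exact congrArg (fun r => r.2.1) (heq t ht)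
  · rw [← p3 q hq t]; exact congrArg (fun r => r.2.2) (heq t ht)
  · intro x' y' z' cx cy cz d hd r1 r2 r3 t ht
    have hc : Continuous fun t => (x' t, y' t, z' t) := by fun_prop
    have := hst (fun t => (x' t, y' t, z' t)) hc d hd (fun s hs => by
      refine norm_prod_le_iff.2 ⟨?_, norm_prod_le_iff.2 ⟨?_, ?_⟩⟩
      · have h := r1 s hs
        rw [← p1 _ hc] at h; exact h
      · have h := r2 s hs
        rw [← p2 _ hc] at h; exact h
      · have h := r3 s hs
        rw [← p3 _ hc] at h; exact h) t ht
    exact ⟨(norm_fst_le _).trans this, (norm_fst_le _).trans ((norm_snd_le _).trans this),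
      (norm_snd_le _).trans ((norm_snd_le _).trans this)⟩

/-! ### The state equations with constant total population -/

/-- Pointwise right-hand side of the `R` equation, for scalar arguments: `b`, `g` are the values of
`β`, `γ`, and `v`, `w` those of the two controls. The quotient `P R / N` is replaced by an
independent argument `Q`, so that it can be truncated or taken with a constant `N`. -/
def fR (lam1 lam2 a1 a2 b g v w R C P Q : ℝ) : ℝ :=
  -lam2 * R + lam1 * C - g * R + a1 * v * P + a2 * (b + w) * Q

/-- Pointwise right-hand side of the `C` equation, with arguments as for `fR`. -/
def fC (lam1 lam2 a1 a2 b g v w R C P Q : ℝ) : ℝ :=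
  -lam1 * C + lam2 * R - g * C + (1 - a2) * (b + w) * Q + (1 - a1) * v * P

/-- Pointwise right-hand side of the `P` equation, with arguments as for `fR`. -/
def fP (b g v w R C P Q : ℝ) : ℝ :=
  -(b + w) * Q - v * P + g * (R + C)

/-- Truncation of `x` to `[-M, M]` (for `0 ≤ M`). -/
def clamp (M x : ℝ) : ℝ := max (-M) (min M x)

lemma clamp_abs_le {M : ℝ} (hM : 0 ≤ M) (x : ℝ) : |clamp M x| ≤ M := by
  unfold clamp
  rw [abs_le]
  exact ⟨le_max_left _ _, max_le (by linarith) (min_le_left _ _)⟩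

lemma clamp_lip (M x y : ℝ) : |clamp M x - clamp M y| ≤ |x - y| := by
  unfold clamp
  refine (abs_max_sub_max_le_max _ _ _ _).trans ?_
  rw [sub_self, abs_zero, max_eq_right (abs_nonneg _)]
  refine (abs_min_sub_min_le_max _ _ _ _).trans ?_
  rw [sub_self, abs_zero, max_eq_right (abs_nonneg _)]

lemma clamp_eq {M x : ℝ} (h : |x| ≤ M) : clamp M x = x := by
  unfold clamp
  rw [abs_le] at h
  rw [min_eq_right h.2, max_eq_right h.1]

lemma clamp_mul_lip {M : ℝ} (hM : 0 ≤ M) (x y x' y' : ℝ) :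
    |clamp M x * clamp M y - clamp M x' * clamp M y'| ≤ M * (|x - x'| + |y - y'|) := by
  have e : clamp M x * clamp M y - clamp M x' * clamp M y' =
    clamp M y * (clamp M x - clamp M x') + clamp M x' * (clamp M y - clamp M y') := by ring
  rw [e, mul_add]
  refine (abs_add_le _ _).trans (add_le_add ?_ ?_)
  · rw [abs_mul]
    exact mul_le_mul (clamp_abs_le hM _) (clamp_lip _ _ _) (abs_nonneg _) hM
  · rw [abs_mul]
    exact mul_le_mul (clamp_abs_le hM _) (clamp_lip _ _ _) (abs_nonneg _) hM

lemma lin_bound {c1 c2 c3 k x y z q m n r : ℝ} (h1 : |c1| ≤ m) (h2 : |c2| ≤ m) (h3 : |c3| ≤ m)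
    (hk : |k| ≤ n) (hq : |q| ≤ r * (|x| + |y| + |z|)) :
    |c1 * x + c2 * y + c3 * z + k * q| ≤ (m + n * r) * (|x| + |y| + |z|) := by
  have t1 : |c1 * x| ≤ m * |x| := by rw [abs_mul]; gcongr
  have t2 : |c2 * y| ≤ m * |y| := by rw [abs_mul]; gcongr
  have t3 : |c3 * z| ≤ m * |z| := by rw [abs_mul]; gcongr
  have t4 : |k * q| ≤ n * (r * (|x| + |y| + |z|)) := by
    rw [abs_mul]
    exact mul_le_mul hk hq (abs_nonneg _) ((abs_nonneg _).trans hk)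
  have := abs_add_le (c1 * x + c2 * y + c3 * z) (k * q)
  have := abs_add_three (c1 * x) (c2 * y) (c3 * z)
  linarith

lemma abs_unit_mul_le {a x K : ℝ} (ha : a ∈ Icc (0:ℝ) 1) (hx : |x| ≤ K) : |a * x| ≤ K := by
  rw [abs_mul, abs_of_nonneg ha.1]
  exact (mul_le_of_le_one_left (abs_nonneg _) ha.2).trans hx

lemma one_sub_mem {a : ℝ} (ha : a ∈ Icc (0:ℝ) 1) : 1 - a ∈ Icc (0:ℝ) 1 :=
  ⟨by linarith [ha.2], by linarith [ha.1]⟩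

/-- For small `e > 0` the controls `u + e d` generate a solution on all of `[0, T]` that differs from
the given one by `O(e)`. The bilinear term is truncated at twice the bound of the given solution,
which makes the system globally Lipschitz; the stability estimate shows that the truncation is
inactive when `e` is small. -/
theorem perturbed_solution {T N B lam1 lam2 a1 a2 R0 C0 P0 : ℝ} (hT : 0 ≤ T) (hN : 0 < N)
    (hB : 1 ≤ B) (hlam1 : |lam1| ≤ B) (hlam2 : |lam2| ≤ B)
    (ha1 : a1 ∈ Icc (0:ℝ) 1) (ha2 : a2 ∈ Icc (0:ℝ) 1)
    {beta gam u1 u2 d1 d2 R C P : ℝ → ℝ}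
    (cbeta : Continuous beta) (cgam : Continuous gam)
    (cR : Continuous R) (cC : Continuous C) (cP : Continuous P)
    (mu1 : LB u1) (mu2 : LB u2) (md1 : LB d1) (md2 : LB d2)
    (bbeta : ∀ t, |beta t| ≤ B) (bgam : ∀ t, |gam t| ≤ B) (bR : ∀ t, |R t| ≤ B)
    (bP : ∀ t, |P t| ≤ B) (bu1 : ∀ t, |u1 t| ≤ B) (bu2 : ∀ t, |u2 t| ≤ B)
    (bd1 : ∀ t, |d1 t| ≤ B) (bd2 : ∀ t, |d2 t| ≤ B)
    (eR : ∀ t ∈ Icc 0 T, R t = R0 + ∫ s in (0:ℝ)..t,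
      fR lam1 lam2 a1 a2 (beta s) (gam s) (u1 s) (u2 s) (R s) (C s) (P s) (P s * R s / N))
    (eC : ∀ t ∈ Icc 0 T, C t = C0 + ∫ s in (0:ℝ)..t,
      fC lam1 lam2 a1 a2 (beta s) (gam s) (u1 s) (u2 s) (R s) (C s) (P s) (P s * R s / N))
    (eP : ∀ t ∈ Icc 0 T, P t = P0 + ∫ s in (0:ℝ)..t,
      fP (beta s) (gam s) (u1 s) (u2 s) (R s) (C s) (P s) (P s * R s / N)) :
    ∃ c : ℝ, 0 ≤ c ∧ ∃ e0 : ℝ, 0 < e0 ∧ e0 ≤ 1 ∧ ∀ e : ℝ, 0 < e → e ≤ e0 →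
      ∃ R' C' P' : ℝ → ℝ, Continuous R' ∧ Continuous C' ∧ Continuous P' ∧
      (∀ t ∈ Icc 0 T, R' t = R0 + ∫ s in (0:ℝ)..t,
        fR lam1 lam2 a1 a2 (beta s) (gam s) (u1 s + e * d1 s) (u2 s + e * d2 s)
          (R' s) (C' s) (P' s) (P' s * R' s / N)) ∧
      (∀ t ∈ Icc 0 T, C' t = C0 + ∫ s in (0:ℝ)..t,
        fC lam1 lam2 a1 a2 (beta s) (gam s) (u1 s + e * d1 s) (u2 s + e * d2 s)
          (R' s) (C' s) (P' s) (P' s * R' s / N)) ∧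
      (∀ t ∈ Icc 0 T, P' t = P0 + ∫ s in (0:ℝ)..t,
        fP (beta s) (gam s) (u1 s + e * d1 s) (u2 s + e * d2 s)
          (R' s) (C' s) (P' s) (P' s * R' s / N)) ∧
      (∀ t ∈ Icc 0 T, |R' t - R t| ≤ c * e ∧ |C' t - C t| ≤ c * e ∧ |P' t - P t| ≤ c * e) := by
  have hB0 : 0 < B := by linarith
  set M : ℝ := 2 * B with hM
  have hM0 : 0 ≤ M := by positivity
  set L : ℝ := 2 * B + 3 * B * (M / N) with hL
  have hL0 : 0 < L := by positivity
  set K : ℝ := B * B + B * (B * B / N) with hK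
  have hK0 : 0 ≤ K := by positivity
  set c : ℝ := 2 * Real.exp (2 * (3 * L) * T) * (K * T) with hc
  have hc0 : 0 ≤ c := by positivity
  have lb : LB beta := .of_continuous cbeta
  have lg : LB gam := .of_continuous cgam
  have lR : LB R := .of_continuous cR
  have lC : LB C := .of_continuous cC
  have lP : LB P := .of_continuous cP
  refine ⟨c, hc0, min 1 (1 / (c + 1)), by positivity, min_le_left _ _, ?_⟩
  intro e he0 he
  have he1 : e ≤ 1 := he.trans (min_le_left _ _)
  have hce : c * e ≤ 1 := by
    have h1 : e ≤ 1 / (c + 1) := he.trans (min_le_right _ _)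
    rw [le_div_iff₀ (by positivity)] at h1
    nlinarith
  have bv : ∀ t, |u1 t + e * d1 t| ≤ 2 * B := fun t => by
    have h1 := abs_add_le (u1 t) (e * d1 t)
    have h2 := abs_unit_mul_le ⟨he0.le, he1⟩ (bd1 t)
    linarith [bu1 t]
  have bw : ∀ t, |beta t + (u2 t + e * d2 t)| ≤ 3 * B := fun t => by
    have h1 := abs_add_three (beta t) (u2 t) (e * d2 t)
    have h2 := abs_unit_mul_le ⟨he0.le, he1⟩ (bd2 t)
    rw [← add_assoc]
    linarith [bu2 t, bbeta t]
  have qlip : ∀ x z x' z' : ℝ, |clamp M z * clamp M x / N - clamp M z' * clamp M x' / N|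
      ≤ M / N * (|x - x'| + |z - z'|) := fun x z x' z' => by
    rw [← sub_div, abs_div, abs_of_pos hN, div_mul_eq_mul_div]
    gcongr
    rw [add_comm]
    exact clamp_mul_lip hM0 _ _ _ _
  have qlip' : ∀ x y z x' y' z' : ℝ, |clamp M z * clamp M x / N - clamp M z' * clamp M x' / N|
      ≤ M / N * (|x - x'| + |y - y'| + |z - z'|) := fun x y z x' y' z' => by
    refine (qlip x z x' z').trans ?_
    gcongr
    linarith [abs_nonneg (y - y')]
  have ccl : Continuous (clamp M) := by unfold clamp; fun_prop
  have lq : ∀ x z : ℝ → ℝ, Continuous x → Continuous z →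
      LB (fun s => clamp M (z s) * clamp M (x s) / N) := fun x z hx hz =>
    .of_continuous (by fun_prop)
  obtain ⟨R', C', P', cR', cC', cP', eR', eC', eP', hst⟩ := picard3 hT hL0
    (fun s x y z => fR lam1 lam2 a1 a2 (beta s) (gam s) (u1 s + e * d1 s) (u2 s + e * d2 s)
      x y z (clamp M z * clamp M x / N))
    (fun s x y z => fC lam1 lam2 a1 a2 (beta s) (gam s) (u1 s + e * d1 s) (u2 s + e * d2 s)
      x y z (clamp M z * clamp M x / N))
    (fun s x y z => fP (beta s) (gam s) (u1 s + e * d1 s) (u2 s + e * d2 s)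
      x y z (clamp M z * clamp M x / N)) R0 C0 P0
    (fun x y z hx hy hz => by
      have := LB.of_continuous hx
      have := LB.of_continuous hy
      have := LB.of_continuous hz
      have := lq x z hx hz
      unfold fR; fun_prop)
    (fun x y z hx hy hz => by
      have := LB.of_continuous hx
      have := LB.of_continuous hy
      have := LB.of_continuous hz
      have := lq x z hx hz
      unfold fC; fun_prop)
    (fun x y z hx hy hz => by
      have := LB.of_continuous hx
      have := LB.of_continuous hy
      have := LB.of_continuous hz
      have := lq x z hx hz
      unfold fP; fun_prop)
    (fun s x y z x' y' z' => by
      have := lin_bound (c1 := -lam2 - gam s) (c2 := lam1) (c3 := a1 * (u1 s + e * d1 s))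
        (k := a2 * (beta s + (u2 s + e * d2 s))) (m := 2 * B) (n := 3 * B)
        (by have := abs_sub (-lam2) (gam s); rw [abs_neg] at this; linarith [bgam s])
        (by linarith) (abs_unit_mul_le ha1 (bv s)) (abs_unit_mul_le ha2 (bw s))
        (qlip' x y z x' y' z')
      refine le_of_eq_of_le (congrArg _ ?_) this
      unfold fR; ring)
    (fun s x y z x' y' z' => by
      have := lin_bound (c1 := lam2) (c2 := -lam1 - gam s) (c3 := (1 - a1) * (u1 s + e * d1 s))
        (k := (1 - a2) * (beta s + (u2 s + e * d2 s))) (m := 2 * B) (n := 3 * B)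
        (by linarith)
        (by have := abs_sub (-lam1) (gam s); rw [abs_neg] at this; linarith [bgam s])
        (abs_unit_mul_le (one_sub_mem ha1) (bv s)) (abs_unit_mul_le (one_sub_mem ha2) (bw s))
        (qlip' x y z x' y' z')
      refine le_of_eq_of_le (congrArg _ ?_) this
      unfold fC; ring)
    (fun s x y z x' y' z' => by
      have := lin_bound (c1 := gam s) (c2 := gam s) (c3 := -(u1 s + e * d1 s))
        (k := -(beta s + (u2 s + e * d2 s))) (m := 2 * B) (n := 3 * B)
        (by linarith [bgam s]) (by linarith [bgam s])
        (by rw [abs_neg]; exact bv s) (by rw [abs_neg]; exact bw s)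
        (qlip' x y z x' y' z')
      refine le_of_eq_of_le (congrArg _ ?_) this
      unfold fP; ring)
  have hq0 : ∀ s, clamp M (P s) * clamp M (R s) / N = P s * R s / N := fun s => by
    rw [clamp_eq (by linarith [bP s]), clamp_eq (by linarith [bR s])]
  -- the unperturbed solution solves the perturbed equation up to an error of order `e`
  have res : ∀ k1 k2 : ℝ, k1 ∈ Icc (0:ℝ) 1 → k2 ∈ Icc (0:ℝ) 1 → ∀ t ∈ Icc 0 T,
      |∫ s in (0:ℝ)..t, (k1 * (d1 s * P s) + k2 * (d2 s * (P s * R s / N)))| ≤ K * T := by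
    intro k1 k2 hk1 hk2 t ht
    have : ‖∫ s in (0:ℝ)..t, (k1 * (d1 s * P s) + k2 * (d2 s * (P s * R s / N)))‖
        ≤ K * |t - 0| := by
      refine intervalIntegral.norm_integral_le_of_norm_le_const fun s _ => ?_
      refine (abs_add_le _ _).trans (add_le_add (abs_unit_mul_le hk1 ?_) (abs_unit_mul_le hk2 ?_))
      · rw [abs_mul]
        exact mul_le_mul (bd1 s) (bP s) (abs_nonneg _) hB0.le
      · rw [abs_mul, abs_div, abs_of_pos hN, abs_mul]
        have := bd2 s
        have := bP s
        have := bR s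
        gcongr
    rw [sub_zero, abs_of_nonneg ht.1] at this
    exact this.trans (mul_le_mul_of_nonneg_left ht.2 hK0)
  have hst' := hst R C P cR cC cP (e * (K * T)) (by positivity)
    (fun t ht => by
      have h1 : R t - (R0 + ∫ s in (0:ℝ)..t, fR lam1 lam2 a1 a2 (beta s) (gam s)
          (u1 s + e * d1 s) (u2 s + e * d2 s) (R s) (C s) (P s)
          (clamp M (P s) * clamp M (R s) / N)) = (-e) * ∫ s in (0:ℝ)..t,
            (a1 * (d1 s * P s) + a2 * (d2 s * (P s * R s / N))) := by
        rw [eR t ht, add_sub_add_left_eq_sub, ← intervalIntegral.integral_sub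
          (LB.intervalIntegrable (by unfold fR; fun_prop) _ _)
          (LB.intervalIntegrable (by simp only [hq0]; unfold fR; fun_prop) _ _),
          ← intervalIntegral.integral_const_mul]
        congr 1; ext s; rw [hq0]; unfold fR; ring
      rw [h1, abs_mul, abs_neg, abs_of_pos he0]
      exact mul_le_mul_of_nonneg_left (res _ _ ha1 ha2 t ht) he0.le)
    (fun t ht => by
      have h1 : C t - (C0 + ∫ s in (0:ℝ)..t, fC lam1 lam2 a1 a2 (beta s) (gam s)
          (u1 s + e * d1 s) (u2 s + e * d2 s) (R s) (C s) (P s)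
          (clamp M (P s) * clamp M (R s) / N)) = (-e) * ∫ s in (0:ℝ)..t,
            ((1 - a1) * (d1 s * P s) + (1 - a2) * (d2 s * (P s * R s / N))) := by
        rw [eC t ht, add_sub_add_left_eq_sub, ← intervalIntegral.integral_sub
          (LB.intervalIntegrable (by unfold fC; fun_prop) _ _)
          (LB.intervalIntegrable (by simp only [hq0]; unfold fC; fun_prop) _ _),
          ← intervalIntegral.integral_const_mul]
        congr 1; ext s; rw [hq0]; unfold fC; ring
      rw [h1, abs_mul, abs_neg, abs_of_pos he0]
      exact mul_le_mul_of_nonneg_left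
        (res _ _ (one_sub_mem ha1) (one_sub_mem ha2) t ht) he0.le)
    (fun t ht => by
      have h1 : P t - (P0 + ∫ s in (0:ℝ)..t, fP (beta s) (gam s)
          (u1 s + e * d1 s) (u2 s + e * d2 s) (R s) (C s) (P s)
          (clamp M (P s) * clamp M (R s) / N)) = e * ∫ s in (0:ℝ)..t,
            (1 * (d1 s * P s) + 1 * (d2 s * (P s * R s / N))) := by
        rw [eP t ht, add_sub_add_left_eq_sub, ← intervalIntegral.integral_sub
          (LB.intervalIntegrable (by unfold fP; fun_prop) _ _)
          (LB.intervalIntegrable (by simp only [hq0]; unfold fP; fun_prop) _ _),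
          ← intervalIntegral.integral_const_mul]
        congr 1; ext s; rw [hq0]; unfold fP; ring
      rw [h1, abs_mul, abs_of_pos he0]
      exact mul_le_mul_of_nonneg_left
        (res _ _ (by simp) (by simp) t ht) he0.le)
  have hcl : ∀ t ∈ Icc 0 T, |R' t - R t| ≤ c * e ∧ |C' t - C t| ≤ c * e ∧ |P' t - P t| ≤ c * e := by
    intro t ht
    have : 2 * Real.exp (2 * (3 * L) * T) * (e * (K * T)) = c * e := by rw [hc]; ring
    have h := hst' t ht
    rwa [this] at h
  -- hence the truncation is inactive along the perturbed solution
  have hq1 : ∀ t ∈ Icc 0 T, clamp M (P' t) * clamp M (R' t) / N = P' t * R' t / N := by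
    intro t ht
    obtain ⟨h1, -, h3⟩ := hcl t ht
    have k1 := abs_sub_abs_le_abs_sub (R' t) (R t)
    have k3 := abs_sub_abs_le_abs_sub (P' t) (P t)
    rw [clamp_eq (by linarith [bP t]), clamp_eq (by linarith [bR t])]
  have sub : ∀ t ∈ Icc 0 T, ∀ s ∈ uIcc 0 t, s ∈ Icc 0 T := by
    intro t ht s hs
    rw [uIcc_of_le ht.1] at hs
    exact ⟨hs.1, hs.2.trans ht.2⟩
  refine ⟨R', C', P', cR', cC', cP', fun t ht => ?_, fun t ht => ?_, fun t ht => ?_, hcl⟩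
  · rw [eR' t ht]
    congr 1
    refine intervalIntegral.integral_congr fun s hs => ?_
    simp only [hq1 s (sub t ht s hs)]
  · rw [eC' t ht]
    congr 1
    refine intervalIntegral.integral_congr fun s hs => ?_
    simp only [hq1 s (sub t ht s hs)]
  · rw [eP' t ht]
    congr 1
    refine intervalIntegral.integral_congr fun s hs => ?_
    simp only [hq1 s (sub t ht s hs)]

/-! ### The adjoint system -/

/-- The adjoint system is linear with bounded coefficients, so its terminal value problem is
solvable on `[0, T]`. The coefficients `m1`, `m2`, `m3` stand for the derivatives of the bilinear
term `(β + u₂) P R / N` with respect to the states. -/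
theorem adjoint_exists {T B W lam1 lam2 a1 a2 k1 : ℝ} (hT : 0 ≤ T)
    (hB : 1 ≤ B) (hW : 0 ≤ W) (hlam1 : |lam1| ≤ B) (hlam2 : |lam2| ≤ B)
    (ha1 : a1 ∈ Icc (0:ℝ) 1) (ha2 : a2 ∈ Icc (0:ℝ) 1)
    {gam u1 m1 m2 m3 : ℝ → ℝ} (lg : LB gam) (lu : LB u1) (l1 : LB m1) (l2 : LB m2) (l3 : LB m3)
    (bgam : ∀ t, |gam t| ≤ B) (bu1 : ∀ t, |u1 t| ≤ B)
    (b1 : ∀ t, |m1 t| ≤ W) (b2 : ∀ t, |m2 t| ≤ W) (b3 : ∀ t, |m3 t| ≤ W) :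
    ∃ p1 p2 p3 : ℝ → ℝ, Continuous p1 ∧ Continuous p2 ∧ Continuous p3 ∧
      (∀ t ∈ Icc 0 T, p1 t = -∫ s in t..T, (lam2 * (p1 s - p2 s) + gam s * (p1 s - p3 s)
        + (p3 s - a2 * p1 s - (1 - a2) * p2 s) * m1 s)) ∧
      (∀ t ∈ Icc 0 T, p2 t = -∫ s in t..T, (lam1 * (p2 s - p1 s) + gam s * (p2 s - p3 s)
        - (p3 s - a2 * p1 s - (1 - a2) * p2 s) * m2 s)) ∧
      (∀ t ∈ Icc 0 T, p3 t = -∫ s in t..T, (-k1 + (p3 s - a1 * p1 s - (1 - a1) * p2 s) * u1 s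
        + (p3 s - a2 * p1 s - (1 - a2) * p2 s) * m3 s)) := by
  have lg' := lg.comp_sub T
  have lu' := lu.comp_sub T
  have l1' := l1.comp_sub T
  have l2' := l2.comp_sub T
  have l3' := l3.comp_sub T
  have hS : ∀ a ∈ Icc (0:ℝ) 1, ∀ x y z : ℝ, |-(z - a * x - (1 - a) * y)|
      ≤ 1 * (|x| + |y| + |z|) := by
    intro a ha x y z
    have := abs_unit_mul_le ha (le_refl |x|)
    have := abs_unit_mul_le (one_sub_mem ha) (le_refl |y|)
    have := abs_sub (z - a * x) ((1 - a) * y)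
    have := abs_sub z (a * x)
    rw [abs_neg]
    linarith
  obtain ⟨q1, q2, q3, c1, c2, c3, e1, e2, e3, -⟩ := picard3 hT
    (by positivity : 0 < 2 * B + (B + W) * 1)
    (fun s x y z => -(lam2 * (x - y) + gam (T - s) * (x - z)
        + (z - a2 * x - (1 - a2) * y) * m1 (T - s)))
    (fun s x y z => -(lam1 * (y - x) + gam (T - s) * (y - z)
        - (z - a2 * x - (1 - a2) * y) * m2 (T - s)))
    (fun s x y z => -(-k1 + (z - a1 * x - (1 - a1) * y) * u1 (T - s)
        + (z - a2 * x - (1 - a2) * y) * m3 (T - s))) 0 0 0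
    (fun x y z hx hy hz => by
      have := LB.of_continuous hx
      have := LB.of_continuous hy
      have := LB.of_continuous hz
      repeat first
        | assumption | apply LB.const | apply LB.neg | apply LB.add | apply LB.sub | apply LB.mul)
    (fun x y z hx hy hz => by
      have := LB.of_continuous hx
      have := LB.of_continuous hy
      have := LB.of_continuous hz
      repeat first
        | assumption | apply LB.const | apply LB.neg | apply LB.add | apply LB.sub | apply LB.mul)
    (fun x y z hx hy hz => by
      have := LB.of_continuous hx
      have := LB.of_continuous hy
      have := LB.of_continuous hz
      repeat first
        | assumption | apply LB.const | apply LB.neg | apply LB.add | apply LB.sub | apply LB.mul)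
    (fun s x y z x' y' z' => by
      have := lin_bound (c1 := -(lam2 + gam (T - s))) (c2 := lam2) (c3 := gam (T - s))
        (k := m1 (T - s)) (m := 2 * B) (n := B + W)
        (by rw [abs_neg]; have := abs_add_le lam2 (gam (T - s)); linarith [bgam (T - s)])
        (by linarith) (by linarith [bgam (T - s)]) (by linarith [b1 (T - s)])
        (hS a2 ha2 (x - x') (y - y') (z - z'))
      refine le_of_eq_of_le (congrArg _ ?_) this
      ring)
    (fun s x y z x' y' z' => by
      have := lin_bound (c1 := lam1) (c2 := -(lam1 + gam (T - s))) (c3 := gam (T - s))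
        (k := -m2 (T - s)) (m := 2 * B) (n := B + W)
        (by linarith)
        (by rw [abs_neg]; have := abs_add_le lam1 (gam (T - s)); linarith [bgam (T - s)])
        (by linarith [bgam (T - s)]) (by rw [abs_neg]; linarith [b2 (T - s)])
        (hS a2 ha2 (x - x') (y - y') (z - z'))
      refine le_of_eq_of_le (congrArg _ ?_) this
      ring)
    (fun s x y z x' y' z' => by
      have bu := bu1 (T - s)
      have bu' := abs_neg (u1 (T - s))
      have := lin_bound (c1 := a1 * u1 (T - s)) (c2 := (1 - a1) * u1 (T - s))
        (c3 := - u1 (T - s))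
        (k := m3 (T - s)) (m := 2 * B) (n := B + W)
        (abs_unit_mul_le ha1 (by linarith)) (abs_unit_mul_le (one_sub_mem ha1) (by linarith))
        (by linarith) (by linarith [b3 (T - s)])
        (hS a2 ha2 (x - x') (y - y') (z - z'))
      refine le_of_eq_of_le (congrArg _ ?_) this
      ring)
  have rev : ∀ t ∈ Icc 0 T, T - t ∈ Icc 0 T := fun t ht =>
    ⟨by linarith [ht.2], by linarith [ht.1]⟩
  -- time reversal turns the initial value problem into the terminal value problem
  have flip : ∀ (h : ℝ → ℝ) (t : ℝ), 0 + ∫ s in (0:ℝ)..(T - t), -h (T - s)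
      = -∫ s in t..T, h s := by
    intro h t
    rw [zero_add, intervalIntegral.integral_neg, intervalIntegral.integral_comp_sub_left,
      sub_sub_cancel, sub_zero]
  refine ⟨fun t => q1 (T - t), fun t => q2 (T - t), fun t => q3 (T - t), by fun_prop,
    by fun_prop, by fun_prop, fun t ht => ?_, fun t ht => ?_, fun t ht => ?_⟩
  · rw [← flip]
    refine (e1 _ (rev t ht)).trans ?_
    simp only [sub_sub_cancel]
  · rw [← flip]
    refine (e2 _ (rev t ht)).trans ?_
    simp only [sub_sub_cancel]
  · rw [← flip]
    refine (e3 _ (rev t ht)).trans ?_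
    simp only [sub_sub_cancel]

/-! ### Variation of the cost -/

/-- Second-order expansion in `e` of the variation of the cost density plus the three duality terms
`pᵢ' δxᵢ + pᵢ δfᵢ`, where the controls change by `e d₁`, `e d₂` and the states `P`, `R`, `C` by
`e x`, `e y`, `-e x - e y`. The adjoint equations cancel every first-order term in `x` and `y`.
The adjoint equations carry `P (C + P) / N²` and the like, the derivatives of `P R / (R + C + P)`,
whereas here `N` is constant; the two agree along variations that leave the total `N` unchanged. -/
lemma hamiltonian_expansion {lam1 lam2 a1 a2 b g v w R C P N p1 p2 p3 k1 k2 k3 e d1 d2 x y S1 S2 : ℝ}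
    (hN : N ≠ 0) (hC : R + C + P = N) (hS1 : S1 = p3 - a1 * p1 - (1 - a1) * p2)
    (hS2 : S2 = p3 - a2 * p1 - (1 - a2) * p2) :
    k1 * (e * x) + k2 * ((v + e * d1) ^ 2 - v ^ 2) + k3 * ((w + e * d2) ^ 2 - w ^ 2)
      + ((lam2 * (p1 - p2) + g * (p1 - p3) + S2 * ((b + w) * P * (C + P) / N ^ 2)) * (e * y)
        + p1 * (fR lam1 lam2 a1 a2 b g (v + e * d1) (w + e * d2) (R + e * y) (C - e * x - e * y)
            (P + e * x) ((P + e * x) * (R + e * y) / N)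
          - fR lam1 lam2 a1 a2 b g v w R C P (P * R / N)))
      + ((lam1 * (p2 - p1) + g * (p2 - p3) - S2 * ((b + w) * P * R / N ^ 2)) * (- e * x - e * y)
        + p2 * (fC lam1 lam2 a1 a2 b g (v + e * d1) (w + e * d2) (R + e * y) (C - e * x - e * y)
            (P + e * x) ((P + e * x) * (R + e * y) / N)
          - fC lam1 lam2 a1 a2 b g v w R C P (P * R / N)))
      + ((-k1 + S1 * v + S2 * ((b + w) * R * (C + R) / N ^ 2)) * (e * x)
        + p3 * (fP b g (v + e * d1) (w + e * d2) (R + e * y) (C - e * x - e * y)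
            (P + e * x) ((P + e * x) * (R + e * y) / N)
          - fP b g v w R C P (P * R / N)))
    = e * ((2 * k2 * v - S1 * P) * d1 + (2 * k3 * w - S2 * P * R / N) * d2)
      + e ^ 2 * (-(S1 * d1 * x) - S2 / N * ((b + w) * x * y + d2 * (P * y + R * x + e * x * y))
        + k2 * d1 ^ 2 + k3 * d2 ^ 2) := by
  obtain rfl : C = N - R - P := by linarith
  subst hS1 hS2
  unfold fR fC fP
  field_simp
  ring

lemma remainder_bound {S1 S2 d1 d2 x y P R N b w e k2 k3 B c Sb : ℝ} (hN : 0 < N) (hB : 0 ≤ B)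
    (hk2 : 0 < k2) (hk3 : 0 < k3) (he0 : 0 < e) (he1 : e ≤ 1)
    (hS1 : |S1| ≤ Sb) (hS2 : |S2| ≤ Sb) (hd1 : |d1| ≤ B) (hd2 : |d2| ≤ B) (hx : |x| ≤ c)
    (hy : |y| ≤ c) (hP : |P| ≤ B) (hR : |R| ≤ B) (hb : |b| ≤ B) (hw : |w| ≤ B) :
    -(S1 * d1 * x) - S2 / N * ((b + w) * x * y + d2 * (P * y + R * x + e * x * y))
        + k2 * d1 ^ 2 + k3 * d2 ^ 2 ≤
      Sb * B * c + Sb / N * ((B + B) * c * c + B * (B * c + B * c + 1 * c * c))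
        + k2 * B ^ 2 + k3 * B ^ 2 := by
  have hSb : 0 ≤ Sb := (abs_nonneg _).trans hS1
  have hc : 0 ≤ c := (abs_nonneg _).trans hx
  have t1 : -(S1 * d1 * x) ≤ Sb * B * c := by
    refine (neg_le_abs _).trans ?_
    rw [abs_mul, abs_mul]
    gcongr
  have t2 : -(S2 / N * ((b + w) * x * y + d2 * (P * y + R * x + e * x * y))) ≤
      Sb / N * ((B + B) * c * c + B * (B * c + B * c + 1 * c * c)) := by
    refine (neg_le_abs _).trans ?_
    have i1 : |(b + w) * x * y| ≤ (B + B) * c * c := by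
      rw [abs_mul, abs_mul]
      have := (abs_add_le b w).trans (add_le_add hb hw)
      gcongr
    have i2 : |P * y + R * x + e * x * y| ≤ B * c + B * c + 1 * c * c := by
      refine (abs_add_three _ _ _).trans ?_
      rw [abs_mul, abs_mul, abs_mul, abs_mul, abs_of_pos he0]
      gcongr
    rw [abs_mul, abs_div, abs_of_pos hN]
    have i3 : |(b + w) * x * y + d2 * (P * y + R * x + e * x * y)| ≤
        (B + B) * c * c + B * (B * c + B * c + 1 * c * c) := by
      refine (abs_add_le _ _).trans ?_
      rw [abs_mul d2]
      gcongr
    gcongr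
  have t3 : k2 * d1 ^ 2 ≤ k2 * B ^ 2 := by
    rw [← sq_abs d1]; gcongr
  have t4 : k3 * d2 ^ 2 ≤ k3 * B ^ 2 := by
    rw [← sq_abs d2]; gcongr
  linarith

/-- The step from `u` to the projection of `q / (2 k)` onto `[0, m]` is a descent direction for
`k u ^ 2 - q u`, strictly so unless it vanishes. -/
lemma projection_ineq {k q u m : ℝ} (hk : 0 < k) (hu : u ∈ Icc 0 m) :
    (2 * k * u - q) * (min (max 0 (q / (2 * k))) m - u) ≤
      -(2 * k * (min (max 0 (q / (2 * k))) m - u) ^ 2) := by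
  have hq : q = 2 * k * (q / (2 * k)) := by field_simp
  set z := q / (2 * k) with hz
  have key : (u - z) * (min (max 0 z) m - u) ≤ -(min (max 0 z) m - u) ^ 2 := by
    obtain ⟨h0, h1⟩ := hu
    rcases le_total 0 z with h | h
    · rw [max_eq_right h]
      rcases le_total z m with h' | h'
      · rw [min_eq_left h']; nlinarith
      · rw [min_eq_right h']; nlinarith
    · rw [max_eq_left h, min_eq_left (h0.trans h1)]; nlinarith
  rw [hq]
  nlinarith

/-- The three right-hand sides add up to zero, so the total population stays constant. -/
lemma state_sum {T N lam1 lam2 a1 a2 R0 C0 P0 : ℝ} (hsum : R0 + C0 + P0 = N)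
    {beta gam v w R C P : ℝ → ℝ} (lb : LB beta) (lg : LB gam) (lv : LB v) (lw : LB w)
    (lR : LB R) (lC : LB C) (lP : LB P)
    (eR : ∀ t ∈ Icc 0 T, R t = R0 + ∫ s in (0:ℝ)..t,
      fR lam1 lam2 a1 a2 (beta s) (gam s) (v s) (w s) (R s) (C s) (P s) (P s * R s / N))
    (eC : ∀ t ∈ Icc 0 T, C t = C0 + ∫ s in (0:ℝ)..t,
      fC lam1 lam2 a1 a2 (beta s) (gam s) (v s) (w s) (R s) (C s) (P s) (P s * R s / N))
    (eP : ∀ t ∈ Icc 0 T, P t = P0 + ∫ s in (0:ℝ)..t,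
      fP (beta s) (gam s) (v s) (w s) (R s) (C s) (P s) (P s * R s / N)) :
    ∀ t ∈ Icc 0 T, R t + C t + P t = N := by
  intro t ht
  have h0 : (∫ s in (0:ℝ)..t, fR lam1 lam2 a1 a2 (beta s) (gam s) (v s) (w s) (R s) (C s) (P s)
        (P s * R s / N)) + (∫ s in (0:ℝ)..t,
      fC lam1 lam2 a1 a2 (beta s) (gam s) (v s) (w s) (R s) (C s) (P s) (P s * R s / N))
      + (∫ s in (0:ℝ)..t,
      fP (beta s) (gam s) (v s) (w s) (R s) (C s) (P s) (P s * R s / N)) = 0 := by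
    rw [← intervalIntegral.integral_add (LB.intervalIntegrable (by unfold fR; fun_prop) _ _)
      (LB.intervalIntegrable (by unfold fC; fun_prop) _ _),
      ← intervalIntegral.integral_add
        (LB.intervalIntegrable (by unfold fR fC; fun_prop) _ _)
        (LB.intervalIntegrable (by unfold fP; fun_prop) _ _)]
    rw [intervalIntegral.integral_congr (g := fun _ => (0:ℝ))
      (fun s _ => by simp only [fR, fC, fP]; ring)]
    simp
  rw [eR t ht, eC t ht, eP t ht]
  linarith

/-- The maximum principle for globally defined, bounded data, with the total population replaced by
the constant `N`. For `d` the step from the optimal controls to the projected ones, minimality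
and the expansion of the cost give `∫ (2 k₂ d₁² + 2 k₃ d₂²) ≤ e K T` for all small `e > 0`, so `d`
vanishes almost everywhere. -/
theorem core {T N B lam1 lam2 a1 a2 R0 C0 P0 u1max u2max k1 k2 k3 : ℝ} (hT : 0 ≤ T) (hN : 0 < N)
    (hsum : R0 + C0 + P0 = N)
    (hB : 1 ≤ B) (hlam1 : |lam1| ≤ B) (hlam2 : |lam2| ≤ B)
    (hu1B : u1max ≤ B) (hu2B : u2max ≤ B)
    (ha1 : a1 ∈ Icc (0:ℝ) 1) (ha2 : a2 ∈ Icc (0:ℝ) 1) (hk2 : 0 < k2) (hk3 : 0 < k3)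
    {beta gam u1 u2 R C P : ℝ → ℝ}
    (cbeta : Continuous beta) (cgam : Continuous gam)
    (cR : Continuous R) (cC : Continuous C) (cP : Continuous P)
    (mu1 : Measurable u1) (mu2 : Measurable u2)
    (bbeta : ∀ t, |beta t| ≤ B) (bgam : ∀ t, |gam t| ≤ B) (bR : ∀ t, |R t| ≤ B)
    (bC : ∀ t, |C t| ≤ B) (bP : ∀ t, |P t| ≤ B)
    (bu1 : ∀ t, u1 t ∈ Icc 0 u1max) (bu2 : ∀ t, u2 t ∈ Icc 0 u2max)
    (eR : ∀ t ∈ Icc 0 T, R t = R0 + ∫ s in (0:ℝ)..t,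
      fR lam1 lam2 a1 a2 (beta s) (gam s) (u1 s) (u2 s) (R s) (C s) (P s) (P s * R s / N))
    (eC : ∀ t ∈ Icc 0 T, C t = C0 + ∫ s in (0:ℝ)..t,
      fC lam1 lam2 a1 a2 (beta s) (gam s) (u1 s) (u2 s) (R s) (C s) (P s) (P s * R s / N))
    (eP : ∀ t ∈ Icc 0 T, P t = P0 + ∫ s in (0:ℝ)..t,
      fP (beta s) (gam s) (u1 s) (u2 s) (R s) (C s) (P s) (P s * R s / N))
    (hmin : ∀ R' C' P' v w : ℝ → ℝ, Continuous R' → Continuous C' → Continuous P' →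
      Measurable v → Measurable w → (∀ t, v t ∈ Icc 0 u1max) → (∀ t, w t ∈ Icc 0 u2max) →
      (∀ t ∈ Icc 0 T, R' t = R0 + ∫ s in (0:ℝ)..t,
        fR lam1 lam2 a1 a2 (beta s) (gam s) (v s) (w s) (R' s) (C' s) (P' s)
          (P' s * R' s / N)) →
      (∀ t ∈ Icc 0 T, C' t = C0 + ∫ s in (0:ℝ)..t,
        fC lam1 lam2 a1 a2 (beta s) (gam s) (v s) (w s) (R' s) (C' s) (P' s)
          (P' s * R' s / N)) →
      (∀ t ∈ Icc 0 T, P' t = P0 + ∫ s in (0:ℝ)..t,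
        fP (beta s) (gam s) (v s) (w s) (R' s) (C' s) (P' s) (P' s * R' s / N)) →
      (∀ t ∈ Icc 0 T, R' t + C' t + P' t = N) →
      cost T k1 k2 k3 P u1 u2 ≤ cost T k1 k2 k3 P' v w) :
    ∃ p1 p2 p3 : ℝ → ℝ, Continuous p1 ∧ Continuous p2 ∧ Continuous p3 ∧
      (∀ t ∈ Icc 0 T, p1 t = -∫ s in t..T, (lam2 * (p1 s - p2 s) + gam s * (p1 s - p3 s)
        + (p3 s - a2 * p1 s - (1 - a2) * p2 s)
          * ((beta s + u2 s) * P s * (C s + P s) / N ^ 2))) ∧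
      (∀ t ∈ Icc 0 T, p2 t = -∫ s in t..T, (lam1 * (p2 s - p1 s) + gam s * (p2 s - p3 s)
        - (p3 s - a2 * p1 s - (1 - a2) * p2 s) * ((beta s + u2 s) * P s * R s / N ^ 2))) ∧
      (∀ t ∈ Icc 0 T, p3 t = -∫ s in t..T, (-k1 + (p3 s - a1 * p1 s - (1 - a1) * p2 s) * u1 s
        + (p3 s - a2 * p1 s - (1 - a2) * p2 s)
          * ((beta s + u2 s) * R s * (C s + R s) / N ^ 2))) ∧
      (∀ᵐ t ∂(volume.restrict (Icc (0:ℝ) T)),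
        u1 t = min (max 0 ((p3 t - a1 * p1 t - (1 - a1) * p2 t) * P t / (2 * k2))) u1max ∧
        u2 t = min (max 0 ((p3 t - a2 * p1 t - (1 - a2) * p2 t) * P t * R t / N / (2 * k3)))
          u2max) := by
  have hB0 : 0 < B := by linarith
  have hu1m : 0 ≤ u1max := (bu1 0).1.trans (bu1 0).2
  have hu2m : 0 ≤ u2max := (bu2 0).1.trans (bu2 0).2
  have au1 : ∀ t, |u1 t| ≤ B := fun t => by
    rw [abs_of_nonneg (bu1 t).1]; exact (bu1 t).2.trans hu1B
  have au2 : ∀ t, |u2 t| ≤ B := fun t => by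
    rw [abs_of_nonneg (bu2 t).1]; exact (bu2 t).2.trans hu2B
  have lu1 : LB u1 := .of_bounded mu1 au1
  have lu2 : LB u2 := .of_bounded mu2 au2
  have lb : LB beta := .of_continuous cbeta
  have lg : LB gam := .of_continuous cgam
  have lR : LB R := .of_continuous cR
  have lC : LB C := .of_continuous cC
  have lP : LB P := .of_continuous cP
  have mbound : ∀ x y z t : ℝ, |x| ≤ B → |y| ≤ B → |z| ≤ B →
      |(beta t + u2 t) * x * (y + z) / N ^ 2| ≤ (B + B) * B * (B + B) / N ^ 2 := by
    intro x y z t hx hy hz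
    rw [abs_div, abs_mul, abs_mul, abs_of_pos (by positivity : 0 < N ^ 2)]
    have := (abs_add_le y z).trans (add_le_add hy hz)
    have := (abs_add_le (beta t) (u2 t)).trans (add_le_add (bbeta t) (au2 t))
    gcongr
  obtain ⟨p1, p2, p3, cp1, cp2, cp3, e1, e2, e3⟩ := adjoint_exists (k1 := k1) hT hB
    (by positivity : 0 ≤ (B + B) * B * (B + B) / N ^ 2) hlam1 hlam2 ha1 ha2 lg lu1
    (m1 := fun s => (beta s + u2 s) * P s * (C s + P s) / N ^ 2)
    (m2 := fun s => (beta s + u2 s) * P s * R s / N ^ 2)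
    (m3 := fun s => (beta s + u2 s) * R s * (C s + R s) / N ^ 2)
    (by fun_prop) (by fun_prop) (by fun_prop) bgam au1
    (fun t => mbound _ _ _ t (bP t) (bC t) (bP t))
    (fun t => by
      have := mbound _ _ 0 t (bP t) (bR t) (by simpa using hB0.le)
      rwa [add_zero] at this)
    (fun t => mbound _ _ _ t (bR t) (bC t) (bR t))
  refine ⟨p1, p2, p3, cp1, cp2, cp3, e1, e2, e3, ?_⟩
  have lp1 : LB p1 := .of_continuous cp1
  have lp2 : LB p2 := .of_continuous cp2
  have lp3 : LB p3 := .of_continuous cp3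
  obtain ⟨S1, hS1⟩ : ∃ S1 : ℝ → ℝ, ∀ t, S1 t = p3 t - a1 * p1 t - (1 - a1) * p2 t :=
    ⟨_, fun _ => rfl⟩
  obtain ⟨S2, hS2⟩ : ∃ S2 : ℝ → ℝ, ∀ t, S2 t = p3 t - a2 * p1 t - (1 - a2) * p2 t :=
    ⟨_, fun _ => rfl⟩
  have cS1 : Continuous S1 := by rw [funext hS1]; fun_prop
  have cS2 : Continuous S2 := by rw [funext hS2]; fun_prop
  simp only [← hS1, ← hS2] at e1 e2 e3 ⊢
  obtain ⟨K1, hK1⟩ := (LB.of_continuous cS1).2 0 T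
  obtain ⟨K2, hK2⟩ := (LB.of_continuous cS2).2 0 T
  rw [uIcc_of_le hT] at hK1 hK2
  -- the direction of variation points from the optimal control to the projected control
  obtain ⟨d1, hd1⟩ : ∃ d1 : ℝ → ℝ, ∀ t, d1 t =
      min (max 0 (S1 t * P t / (2 * k2))) u1max - u1 t := ⟨_, fun _ => rfl⟩
  obtain ⟨d2, hd2⟩ : ∃ d2 : ℝ → ℝ, ∀ t, d2 t =
      min (max 0 (S2 t * P t * R t / N / (2 * k3))) u2max - u2 t := ⟨_, fun _ => rfl⟩
  have ld1 : LB d1 := by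
    rw [funext hd1]
    exact LB.sub (.of_continuous (by fun_prop)) lu1
  have ld2 : LB d2 := by
    rw [funext hd2]
    exact LB.sub (.of_continuous (by fun_prop)) lu2
  have range : ∀ z u m : ℝ, 0 ≤ m → u ∈ Icc 0 m → m ≤ B → |min (max 0 z) m - u| ≤ B ∧
      ∀ e : ℝ, 0 ≤ e → e ≤ 1 → u + e * (min (max 0 z) m - u) ∈ Icc 0 m := by
    intro z u m hm hu hmB
    have h0 : 0 ≤ min (max 0 z) m := le_min (le_max_left _ _) hm
    have h1 : min (max 0 z) m ≤ m := min_le_right _ _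
    refine ⟨by rw [abs_le]; constructor <;> linarith [hu.1, hu.2], fun e he0 he1 => ?_⟩
    constructor <;> nlinarith [hu.1, hu.2]
  have bd1 : ∀ t, |d1 t| ≤ B := fun t => by
    rw [hd1]; exact (range _ _ _ hu1m (bu1 t) hu1B).1
  have bd2 : ∀ t, |d2 t| ≤ B := fun t => by
    rw [hd2]; exact (range _ _ _ hu2m (bu2 t) hu2B).1
  obtain ⟨c, hc0, e0, he0, he01, hpert⟩ := perturbed_solution hT hN hB hlam1 hlam2 ha1 ha2
    cbeta cgam cR cC cP lu1 lu2 ld1 ld2 bbeta bgam bR bP au1 au2 bd1 bd2 eR eC eP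
  have hNs := state_sum hsum lb lg lu1 lu2 lR lC lP eR eC eP
  set Sb := max K1 K2 with hSb
  set K := Sb * B * c + Sb / N * ((B + B) * c * c + B * (B * c + B * c + 1 * c * c))
        + k2 * B ^ 2 + k3 * B ^ 2 with hK
  set I : ℝ := ∫ s in (0:ℝ)..T, (2 * k2 * d1 s ^ 2 + 2 * k3 * d2 s ^ 2) with hI
  have main : ∀ e, 0 < e → e ≤ e0 → I ≤ e * (K * T) := by
    intro e hepos hele
    have he1 : e ≤ 1 := hele.trans he01
    obtain ⟨R', C', P', cR', cC', cP', eR', eC', eP', hcl⟩ := hpert e hepos hele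
    have lR' : LB R' := .of_continuous cR'
    have lC' : LB C' := .of_continuous cC'
    have lP' : LB P' := .of_continuous cP'
    have hNs' := state_sum hsum lb lg (v := fun s => u1 s + e * d1 s)
      (w := fun s => u2 s + e * d2 s) (by fun_prop) (by fun_prop) lR' lC' lP' eR' eC' eP'
    have hcost := hmin R' C' P' (fun s => u1 s + e * d1 s) (fun s => u2 s + e * d2 s)
      cR' cC' cP' (mu1.add (ld1.1.const_mul e)) (mu2.add (ld2.1.const_mul e))
      (fun t => by simp only [hd1]; exact (range _ _ _ hu1m (bu1 t) hu1B).2 e hepos.le he1)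
      (fun t => by simp only [hd2]; exact (range _ _ _ hu2m (bu2 t) hu2B).2 e hepos.le he1)
      eR' eC' eP' hNs'
    -- abbreviations for the vector fields along the two trajectories
    obtain ⟨AR, hAR⟩ : ∃ A : ℝ → ℝ, ∀ s, A s = fR lam1 lam2 a1 a2 (beta s) (gam s) (u1 s) (u2 s)
      (R s) (C s) (P s) (P s * R s / N) := ⟨_, fun _ => rfl⟩
    obtain ⟨AC, hAC⟩ : ∃ A : ℝ → ℝ, ∀ s, A s = fC lam1 lam2 a1 a2 (beta s) (gam s) (u1 s) (u2 s)
      (R s) (C s) (P s) (P s * R s / N) := ⟨_, fun _ => rfl⟩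
    obtain ⟨AP, hAP⟩ : ∃ A : ℝ → ℝ, ∀ s, A s = fP (beta s) (gam s) (u1 s) (u2 s)
      (R s) (C s) (P s) (P s * R s / N) := ⟨_, fun _ => rfl⟩
    obtain ⟨AR', hAR'⟩ : ∃ A : ℝ → ℝ, ∀ s, A s = fR lam1 lam2 a1 a2 (beta s) (gam s)
      (u1 s + e * d1 s) (u2 s + e * d2 s) (R' s) (C' s) (P' s) (P' s * R' s / N) :=
      ⟨_, fun _ => rfl⟩
    obtain ⟨AC', hAC'⟩ : ∃ A : ℝ → ℝ, ∀ s, A s = fC lam1 lam2 a1 a2 (beta s) (gam s)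
      (u1 s + e * d1 s) (u2 s + e * d2 s) (R' s) (C' s) (P' s) (P' s * R' s / N) :=
      ⟨_, fun _ => rfl⟩
    obtain ⟨AP', hAP'⟩ : ∃ A : ℝ → ℝ, ∀ s, A s = fP (beta s) (gam s)
      (u1 s + e * d1 s) (u2 s + e * d2 s) (R' s) (C' s) (P' s) (P' s * R' s / N) :=
      ⟨_, fun _ => rfl⟩
    obtain ⟨b1, hb1⟩ : ∃ b : ℝ → ℝ, ∀ s, b s = lam2 * (p1 s - p2 s) + gam s * (p1 s - p3 s)
        + S2 s * ((beta s + u2 s) * P s * (C s + P s) / N ^ 2) := ⟨_, fun _ => rfl⟩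
    obtain ⟨b2, hb2⟩ : ∃ b : ℝ → ℝ, ∀ s, b s = lam1 * (p2 s - p1 s) + gam s * (p2 s - p3 s)
        - S2 s * ((beta s + u2 s) * P s * R s / N ^ 2) := ⟨_, fun _ => rfl⟩
    obtain ⟨b3, hb3⟩ : ∃ b : ℝ → ℝ, ∀ s, b s = -k1 + S1 s * u1 s
        + S2 s * ((beta s + u2 s) * R s * (C s + R s) / N ^ 2) := ⟨_, fun _ => rfl⟩
    have lS1 := LB.of_continuous cS1
    have lS2 := LB.of_continuous cS2
    have lAR : LB AR := by rw [funext hAR]; unfold fR; fun_prop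
    have lAC : LB AC := by rw [funext hAC]; unfold fC; fun_prop
    have lAP : LB AP := by rw [funext hAP]; unfold fP; fun_prop
    have lAR' : LB AR' := by rw [funext hAR']; unfold fR; fun_prop
    have lAC' : LB AC' := by rw [funext hAC']; unfold fC; fun_prop
    have lAP' : LB AP' := by rw [funext hAP']; unfold fP; fun_prop
    have lb1 : LB b1 := by rw [funext hb1]; fun_prop
    have lb2 : LB b2 := by rw [funext hb2]; fun_prop
    have lb3 : LB b3 := by rw [funext hb3]; fun_prop
    simp only [← hAR, ← hAC, ← hAP, ← hAR', ← hAC', ← hAP', ← hb1, ← hb2, ← hb3] at eR eC eP eR' eC' eP' e1 e2 e3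
    have dual : ∀ (X X' A A' p b : ℝ → ℝ) (X0 : ℝ), LB A → LB A' → LB b →
        (∀ t ∈ Icc 0 T, X t = X0 + ∫ s in (0:ℝ)..t, A s) →
        (∀ t ∈ Icc 0 T, X' t = X0 + ∫ s in (0:ℝ)..t, A' s) →
        (∀ t ∈ Icc 0 T, p t = -∫ s in t..T, b s) →
        ∫ s in (0:ℝ)..T, (b s * (X' s - X s) + p s * (A' s - A s)) = 0 := by
      intro X X' A A' p b X0 hA hA' hb hX hX' hp
      refine ibp hT (a := fun s => A' s - A s) (X := fun s => X' s - X s)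
        ((hA'.sub hA).intervalIntegrable _ _) (hb.intervalIntegrable _ _) (fun t ht => ?_) hp
      rw [intervalIntegral.integral_sub (hA'.intervalIntegrable _ _) (hA.intervalIntegrable _ _),
        hX t ht, hX' t ht]
      ring
    have D1 := dual _ _ _ _ _ _ _ lAR lAR' lb1 eR eR' e1
    have D2 := dual _ _ _ _ _ _ _ lAC lAC' lb2 eC eC' e2
    have D3 := dual _ _ _ _ _ _ _ lAP lAP' lb3 eP eP' e3
    have total : cost T k1 k2 k3 P' (fun s => u1 s + e * d1 s) (fun s => u2 s + e * d2 s)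
        - cost T k1 k2 k3 P u1 u2 = ∫ s in (0:ℝ)..T,
          ((k1 * P' s + k2 * (u1 s + e * d1 s) ^ 2 + k3 * (u2 s + e * d2 s) ^ 2
            - (k1 * P s + k2 * u1 s ^ 2 + k3 * u2 s ^ 2))
          + (b1 s * (R' s - R s) + p1 s * (AR' s - AR s))
          + (b2 s * (C' s - C s) + p2 s * (AC' s - AC s))
          + (b3 s * (P' s - P s) + p3 s * (AP' s - AP s))) := by
      rw [intervalIntegral.integral_add (LB.intervalIntegrable (by fun_prop) _ _)
          (LB.intervalIntegrable (by fun_prop) _ _), D3,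
        intervalIntegral.integral_add (LB.intervalIntegrable (by fun_prop) _ _)
          (LB.intervalIntegrable (by fun_prop) _ _), D2,
        intervalIntegral.integral_add (LB.intervalIntegrable (by fun_prop) _ _)
          (LB.intervalIntegrable (by fun_prop) _ _), D1,
        intervalIntegral.integral_sub (LB.intervalIntegrable (by fun_prop) _ _)
          (LB.intervalIntegrable (by fun_prop) _ _)]
      unfold cost
      ring
    have upper : cost T k1 k2 k3 P' (fun s => u1 s + e * d1 s) (fun s => u2 s + e * d2 s)
        - cost T k1 k2 k3 P u1 u2 ≤ ∫ s in (0:ℝ)..T,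
          ((-e) * (2 * k2 * d1 s ^ 2 + 2 * k3 * d2 s ^ 2) + e ^ 2 * K) := by
      rw [total]
      refine intervalIntegral.integral_mono_on hT (LB.intervalIntegrable (by fun_prop) _ _)
        (LB.intervalIntegrable (by fun_prop) _ _) fun s hs => ?_
      obtain ⟨y, hy⟩ : ∃ y, R' s = R s + e * y := ⟨(R' s - R s) / e, by field_simp; ring⟩
      obtain ⟨x, hx⟩ : ∃ x, P' s = P s + e * x := ⟨(P' s - P s) / e, by field_simp; ring⟩
      have hz : C' s = C s - e * x - e * y := by linarith [hNs s hs, hNs' s hs]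
      obtain ⟨cl1, -, cl3⟩ := hcl s hs
      have bx : |x| ≤ c := by
        rw [hx, add_sub_cancel_left, abs_mul, abs_of_pos hepos, mul_comm] at cl3
        exact le_of_mul_le_mul_right cl3 hepos
      have byy : |y| ≤ c := by
        rw [hy, add_sub_cancel_left, abs_mul, abs_of_pos hepos, mul_comm] at cl1
        exact le_of_mul_le_mul_right cl1 hepos
      have ex := hamiltonian_expansion (lam1 := lam1) (lam2 := lam2) (b := beta s) (g := gam s)
        (v := u1 s) (w := u2 s) (k1 := k1) (k2 := k2) (k3 := k3) (e := e) (d1 := d1 s)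
        (d2 := d2 s) (x := x) (y := y) hN.ne' (hNs s hs) (hS1 s) (hS2 s)
      have rb := remainder_bound (k2 := k2) (k3 := k3) hN hB0.le hk2 hk3 hepos he1
        ((hK1 s hs).trans (le_max_left K1 K2)) ((hK2 s hs).trans (le_max_right K1 K2))
        (bd1 s) (bd2 s) bx byy (bP s) (bR s) (bbeta s) (au2 s)
      have pr1 := projection_ineq (q := S1 s * P s) hk2 (bu1 s)
      have pr2 := projection_ineq (q := S2 s * P s * R s / N) hk3 (bu2 s)
      rw [← hd1] at pr1
      rw [← hd2] at pr2
      have rb' := mul_le_mul_of_nonneg_left rb (sq_nonneg e)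
      have pr' := mul_le_mul_of_nonneg_left (add_le_add pr1 pr2) hepos.le
      rw [hAR, hAR', hAC, hAC', hAP, hAP', hb1, hb2, hb3, hx, hy, hz]
      refine le_trans (le_of_eq ?_) (ex.trans_le ((add_le_add pr' rb').trans (le_of_eq ?_)))
      · ring
      · rw [hK, hSb]; ring
    rw [intervalIntegral.integral_add (LB.intervalIntegrable (by fun_prop) _ _)
          (LB.intervalIntegrable (by fun_prop) _ _), intervalIntegral.integral_const_mul,
          intervalIntegral.integral_const, ← hI, sub_zero, smul_eq_mul] at upper
    have : e * I ≤ e * (e * (K * T)) := by linarith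
    exact le_of_mul_le_mul_left this hepos
  have hI0 : I ≤ 0 := by
    by_contra hcon
    push Not at hcon
    set e := min e0 (I / (2 * (|K * T| + 1))) with he
    have hepos : 0 < e := by positivity
    have h1 := main e hepos (min_le_left _ _)
    have h2 : e * (|K * T| + 1) ≤ I / 2 := by
      have : e ≤ I / (2 * (|K * T| + 1)) := min_le_right _ _
      rw [le_div_iff₀ (by positivity)] at this
      linarith
    have h3 : e * (K * T) ≤ e * (|K * T| + 1) :=
      mul_le_mul_of_nonneg_left (by linarith [le_abs_self (K * T)]) hepos.le
    linarith
  have hII : I = 0 := le_antisymm hI0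
    (intervalIntegral.integral_nonneg hT fun s _ => by positivity)
  have hae := (intervalIntegral.integral_eq_zero_iff_of_le_of_nonneg_ae hT
    (Filter.Eventually.of_forall fun s => by
      show 0 ≤ 2 * k2 * d1 s ^ 2 + 2 * k3 * d2 s ^ 2
      positivity)
    (LB.intervalIntegrable (by fun_prop) _ _)).1 hII
  rw [← restrict_Ioc_eq_restrict_Icc]
  filter_upwards [hae] with t ht
  simp only [Pi.zero_apply] at ht
  have q1 : 0 ≤ 2 * k2 * d1 t ^ 2 := by positivity
  have q2 : 0 ≤ 2 * k3 * d2 t ^ 2 := by positivity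
  have z1 : d1 t = 0 := by
    have : 2 * k2 * d1 t ^ 2 = 0 := by linarith
    have hk : 2 * k2 ≠ 0 := by positivity
    simpa [hk] using this
  have z2 : d2 t = 0 := by
    have : 2 * k3 * d2 t ^ 2 = 0 := by linarith
    have hk : 2 * k3 ≠ 0 := by positivity
    simpa [hk] using this
  rw [hd1] at z1
  rw [hd2] at z2
  exact ⟨by linarith, by linarith⟩

/-! ### Reduction to constant total population -/

lemma rhsR_eq (lam1 lam2 a1 a2 : ℝ) (beta gam u1 u2 R C P : ℝ → ℝ) (s Q : ℝ)
    (hQ : P s * R s / (R s + C s + P s) = Q) :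
    rhsR lam1 lam2 a1 a2 beta gam u1 u2 R C P s =
      fR lam1 lam2 a1 a2 (beta s) (gam s) (u1 s) (u2 s) (R s) (C s) (P s) Q := by
  subst hQ; unfold rhsR fR; ring

lemma rhsC_eq (lam1 lam2 a1 a2 : ℝ) (beta gam u1 u2 R C P : ℝ → ℝ) (s Q : ℝ)
    (hQ : P s * R s / (R s + C s + P s) = Q) :
    rhsC lam1 lam2 a1 a2 beta gam u1 u2 R C P s =
      fC lam1 lam2 a1 a2 (beta s) (gam s) (u1 s) (u2 s) (R s) (C s) (P s) Q := by
  subst hQ; unfold rhsC fC; ring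

lemma rhsP_eq (lam1 lam2 a1 a2 : ℝ) (beta gam u1 u2 R C P : ℝ → ℝ) (s Q : ℝ)
    (hQ : P s * R s / (R s + C s + P s) = Q) :
    rhsP lam1 lam2 a1 a2 beta gam u1 u2 R C P s =
      fP (beta s) (gam s) (u1 s) (u2 s) (R s) (C s) (P s) Q := by
  subst hQ; unfold rhsP fP; ring

/-- The total population is conserved along every solution. Since the quotient `P R / N` is junk
where `N = 0`, it must first be excluded that `N` drops below half of its initial value: up to the
first time this happens the right-hand sides are bounded and add up to zero, so `N` still has its
initial value there. -/
lemma conservation {T lam1 lam2 a1 a2 R0 C0 P0 : ℝ} (hN : 0 < R0 + C0 + P0)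
    {beta gam v w R C P : ℝ → ℝ} (lb : LB beta) (lg : LB gam) (lv : LB v) (lw : LB w)
    (cR : Continuous R) (cC : Continuous C) (cP : Continuous P)
    (eR : ∀ t ∈ Icc 0 T, R t = R0 + ∫ s in (0:ℝ)..t, rhsR lam1 lam2 a1 a2 beta gam v w R C P s)
    (eC : ∀ t ∈ Icc 0 T, C t = C0 + ∫ s in (0:ℝ)..t, rhsC lam1 lam2 a1 a2 beta gam v w R C P s)
    (eP : ∀ t ∈ Icc 0 T, P t = P0 + ∫ s in (0:ℝ)..t, rhsP lam1 lam2 a1 a2 beta gam v w R C P s) :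
    ∀ t ∈ Icc 0 T, R t + C t + P t = R0 + C0 + P0 := by
  set N := R0 + C0 + P0 with hNdef
  have cn : Continuous fun t => R t + C t + P t := by fun_prop
  have lR : LB R := .of_continuous cR
  have lC : LB C := .of_continuous cC
  have lP : LB P := .of_continuous cP
  have step : ∀ t ∈ Icc 0 T, (∀ s ∈ Icc 0 t, N / 2 ≤ R s + C s + P s) →
      R t + C t + P t = N := by
    intro t ht hs
    obtain ⟨Q, hQ⟩ : ∃ Q : ℝ → ℝ, ∀ s, Q s = P s * R s * (max (R s + C s + P s) (N / 2))⁻¹ :=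
      ⟨_, fun _ => rfl⟩
    have lQ : LB Q := by
      rw [funext hQ]
      refine .of_continuous (Continuous.mul (by fun_prop) (Continuous.inv₀ (by fun_prop) ?_))
      intro s
      exact (lt_max_of_lt_right (by linarith)).ne'
    have hQs : ∀ s ∈ uIcc 0 t, P s * R s / (R s + C s + P s) = Q s := by
      intro s h
      rw [uIcc_of_le ht.1] at h
      rw [hQ, max_eq_left (hs s h), div_eq_mul_inv]
    have h0 : (∫ s in (0:ℝ)..t, fR lam1 lam2 a1 a2 (beta s) (gam s) (v s) (w s) (R s) (C s) (P s)
          (Q s)) + (∫ s in (0:ℝ)..t,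
        fC lam1 lam2 a1 a2 (beta s) (gam s) (v s) (w s) (R s) (C s) (P s) (Q s))
        + (∫ s in (0:ℝ)..t, fP (beta s) (gam s) (v s) (w s) (R s) (C s) (P s) (Q s)) = 0 := by
      rw [← intervalIntegral.integral_add (LB.intervalIntegrable (by unfold fR; fun_prop) _ _)
        (LB.intervalIntegrable (by unfold fC; fun_prop) _ _),
        ← intervalIntegral.integral_add
          (LB.intervalIntegrable (by unfold fR fC; fun_prop) _ _)
          (LB.intervalIntegrable (by unfold fP; fun_prop) _ _)]
      rw [intervalIntegral.integral_congr (g := fun _ => (0:ℝ))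
        (fun s _ => by simp only [fR, fC, fP]; ring)]
      simp
    rw [eR t ht, eC t ht, eP t ht,
      intervalIntegral.integral_congr fun s h => rhsR_eq lam1 lam2 a1 a2 beta gam v w R C P s _ (hQs s h),
      intervalIntegral.integral_congr fun s h => rhsC_eq lam1 lam2 a1 a2 beta gam v w R C P s _ (hQs s h),
      intervalIntegral.integral_congr fun s h => rhsP_eq lam1 lam2 a1 a2 beta gam v w R C P s _ (hQs s h)]
    linarith
  have barrier : ∀ t ∈ Icc 0 T, N / 2 < R t + C t + P t := by
    by_contra! hcon
    obtain ⟨t1, ht1, hlow⟩ := hcon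
    have h0T : (0:ℝ) ≤ T := ht1.1.trans ht1.2
    have hcpt : IsCompact (Icc 0 T ∩ {t | R t + C t + P t ≤ N / 2}) :=
      isCompact_Icc.inter_right (isClosed_le cn continuous_const)
    obtain ⟨t0, ⟨ht0, hl0⟩, hleast⟩ := hcpt.exists_isLeast ⟨t1, ht1, hlow⟩
    have hn0 : R 0 + C 0 + P 0 = N := by
      rw [eR 0 ⟨le_rfl, h0T⟩, eC 0 ⟨le_rfl, h0T⟩, eP 0 ⟨le_rfl, h0T⟩]; simp [hNdef]
    obtain ⟨c, hc, hcN⟩ := intermediate_value_Icc' ht0.1 cn.continuousOn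
      (⟨hl0, by show N / 2 ≤ R 0 + C 0 + P 0; rw [hn0]; linarith⟩ : N / 2 ∈ Icc _ _)
    have hct : c = t0 := le_antisymm hc.2 (hleast ⟨⟨hc.1, hc.2.trans ht0.2⟩, hcN.le⟩)
    rw [hct] at hcN
    have := step t0 ht0 fun s hs => by
      by_contra! hlt
      have hst : s = t0 := le_antisymm hs.2 (hleast ⟨⟨hs.1, hs.2.trans ht0.2⟩, hlt.le⟩)
      rw [hst] at hlt
      exact hlt.ne hcN
    simp only at hcN
    linarith
  exact fun t ht => step t ht fun s hs => (barrier s ⟨hs.1, hs.2.trans ht.2⟩).le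

/-- A function continuous on `[0, T]` agrees there with a bounded function continuous on `ℝ`. -/
lemma extend_continuous {T : ℝ} (hT : 0 ≤ T) {f : ℝ → ℝ} (hf : ContinuousOn f (Icc 0 T)) :
    ∃ g : ℝ → ℝ, Continuous g ∧ (∃ K, ∀ t, |g t| ≤ K) ∧ ∀ t ∈ Icc 0 T, g t = f t := by
  obtain ⟨K, hK⟩ := isCompact_Icc.exists_bound_of_continuousOn hf
  refine ⟨IccExtend hT ((Icc 0 T).restrict f), ?_, ⟨K, fun t => ?_⟩, fun t ht => ?_⟩
  · exact (continuousOn_iff_continuous_restrict.1 hf).Icc_extend'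
  · exact hK _ (projIcc 0 T hT t).2
  · exact IccExtend_of_mem hT _ ht

/-- Necessary optimality conditions (Pontryagin Maximum Principle): any minimizer of the
optimal control problem admits absolutely continuous multipliers solving the adjoint
system with zero transversality conditions at `t_f`, and the optimal controls are given
by the projection formulas almost everywhere. -/
theorem necessary_optimality_conditions
    (t_f lam1 lam2 a1 a2 u1max u2max R0 C0 P0 k1 k2 k3 : ℝ)
    (ht_f : 0 < t_f)
    (hlam1 : 0 ≤ lam1) (hlam2 : 0 ≤ lam2)
    (ha1 : a1 ∈ Icc (0:ℝ) 1) (ha2 : a2 ∈ Icc (0:ℝ) 1)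
    (beta gam : ℝ → ℝ)
    (hbeta_cont : ContinuousOn beta (Icc 0 t_f))
    (hbeta_nonneg : ∀ t ∈ Icc (0:ℝ) t_f, 0 ≤ beta t)
    (hgam_cont : ContinuousOn gam (Icc 0 t_f))
    (hgam_nonneg : ∀ t ∈ Icc (0:ℝ) t_f, 0 ≤ gam t)
    (hu1max : 0 < u1max) (hu2max : 0 < u2max)
    (hk1 : 0 < k1) (hk2 : 0 < k2) (hk3 : 0 < k3)
    (hR0 : 0 ≤ R0) (hC0 : 0 ≤ C0) (hP0 : 0 ≤ P0)
    (hN0 : 0 < R0 + C0 + P0)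
    (Rs Cs Ps u1s u2s : ℝ → ℝ)
    (hfeas : Feasible t_f lam1 lam2 a1 a2 u1max u2max R0 C0 P0 beta gam u1s u2s Rs Cs Ps)
    (hmin : ∀ R C P u1 u2 : ℝ → ℝ,
      Feasible t_f lam1 lam2 a1 a2 u1max u2max R0 C0 P0 beta gam u1 u2 R C P →
      cost t_f k1 k2 k3 Ps u1s u2s ≤ cost t_f k1 k2 k3 P u1 u2) :
    ∃ p1 p2 p3 : ℝ → ℝ,
      ContinuousOn p1 (Icc 0 t_f) ∧ ContinuousOn p2 (Icc 0 t_f) ∧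
      ContinuousOn p3 (Icc 0 t_f) ∧
      -- adjoint system in integral (absolutely continuous, a.e.) form
      (∀ t ∈ Icc (0:ℝ) t_f,
        p1 t = -∫ s in t..t_f, adj1 lam1 lam2 a1 a2 k1 beta gam u1s u2s Rs Cs Ps p1 p2 p3 s) ∧
      (∀ t ∈ Icc (0:ℝ) t_f,
        p2 t = -∫ s in t..t_f, adj2 lam1 lam2 a1 a2 k1 beta gam u1s u2s Rs Cs Ps p1 p2 p3 s) ∧
      (∀ t ∈ Icc (0:ℝ) t_f,
        p3 t = -∫ s in t..t_f, adj3 lam1 lam2 a1 a2 k1 beta gam u1s u2s Rs Cs Ps p1 p2 p3 s) ∧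
      -- transversality conditions
      p1 t_f = 0 ∧ p2 t_f = 0 ∧ p3 t_f = 0 ∧
      -- characterization of the optimal controls
      (∀ᵐ t ∂(volume.restrict (Icc (0:ℝ) t_f)),
        u1s t = min (max 0
          ((p3 t - a1 * p1 t - (1 - a1) * p2 t) * Ps t / (2 * k2))) u1max) ∧
      (∀ᵐ t ∂(volume.restrict (Icc (0:ℝ) t_f)),
        u2s t = min (max 0
          ((p3 t - a2 * p1 t - (1 - a2) * p2 t) * Ps t * Rs t
            / (2 * k3 * (Rs t + Cs t + Ps t)))) u2max) := by
  obtain ⟨mu1, mu2, ru1, ru2, ⟨cR, cC, cP, eR, eC, eP⟩, iR, iC, iP⟩ := hfeas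
  have hT := ht_f.le
  -- replace all data by bounded functions on `ℝ` that agree with them on `[0, t_f]`
  obtain ⟨B', cB', ⟨Kb, hKb⟩, xb⟩ := extend_continuous hT hbeta_cont
  obtain ⟨G', cG', ⟨Kg, hKg⟩, xg⟩ := extend_continuous hT hgam_cont
  obtain ⟨R', cR', ⟨KR, hKR⟩, xR⟩ := extend_continuous hT cR
  obtain ⟨C', cC', ⟨KC, hKC⟩, xC⟩ := extend_continuous hT cC
  obtain ⟨P', cP', ⟨KP, hKP⟩, xP⟩ := extend_continuous hT cP
  have cut : ∀ (u : ℝ → ℝ) (m : ℝ), 0 < m → Measurable u → (∀ t ∈ Icc 0 t_f, u t ∈ Icc 0 m) →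
      ∃ v : ℝ → ℝ, Measurable v ∧ (∀ t, v t ∈ Icc 0 m) ∧ ∀ t ∈ Icc 0 t_f, v t = u t := by
    intro u m hm hu hr
    refine ⟨fun t => min (max 0 (u t)) m, (measurable_const.max hu).min measurable_const,
      fun t => ⟨le_min (le_max_left _ _) hm.le, min_le_right _ _⟩, fun t ht => ?_⟩
    simp only
    rw [max_eq_right (hr t ht).1, min_eq_left (hr t ht).2]
  obtain ⟨v1, mv1, rv1, xv1⟩ := cut u1s u1max hu1max mu1 ru1
  obtain ⟨v2, mv2, rv2, xv2⟩ := cut u2s u2max hu2max mu2 ru2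
  have sub : ∀ t ∈ Icc 0 t_f, uIcc 0 t ⊆ Icc 0 t_f := fun t ht => by
    rw [uIcc_of_le ht.1]; exact Icc_subset_Icc_right ht.2
  have sub' : ∀ t ∈ Icc 0 t_f, uIcc t t_f ⊆ Icc 0 t_f := fun t ht => by
    rw [uIcc_of_le ht.2]; exact Icc_subset_Icc_left ht.1
  rw [iR] at eR
  rw [iC] at eC
  rw [iP] at eP
  have av : ∀ (v : ℝ → ℝ) (m : ℝ), (∀ t, v t ∈ Icc 0 m) → ∀ t, |v t| ≤ m := fun v m h t => by
    rw [abs_of_nonneg (h t).1]; exact (h t).2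
  set N := R0 + C0 + P0 with hN
  have hcons := conservation (T := t_f) (lam1 := lam1) (lam2 := lam2) (a1 := a1) (a2 := a2) hN0
    (.of_continuous cB') (.of_continuous cG') (.of_bounded mv1 (av v1 _ rv1))
    (.of_bounded mv2 (av v2 _ rv2)) cR' cC' cP'
    (fun t ht => by
      rw [xR t ht, eR t ht]
      refine congrArg _ (intervalIntegral.integral_congr fun s hs => ?_)
      have h := sub t ht hs
      simp only [rhsR, xb s h, xg s h, xR s h, xC s h, xP s h, xv1 s h, xv2 s h])
    (fun t ht => by
      rw [xC t ht, eC t ht]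
      refine congrArg _ (intervalIntegral.integral_congr fun s hs => ?_)
      have h := sub t ht hs
      simp only [rhsC, xb s h, xg s h, xR s h, xC s h, xP s h, xv1 s h, xv2 s h])
    (fun t ht => by
      rw [xP t ht, eP t ht]
      refine congrArg _ (intervalIntegral.integral_congr fun s hs => ?_)
      have h := sub t ht hs
      simp only [rhsP, xb s h, xg s h, xR s h, xC s h, xP s h, xv1 s h, xv2 s h])
  rw [← hN] at hcons
  have hNs : ∀ t ∈ Icc 0 t_f, Rs t + Cs t + Ps t = N := fun t ht => by
    rw [← xR t ht, ← xC t ht, ← xP t ht]; exact hcons t ht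
  have hQs : ∀ t ∈ Icc 0 t_f, Ps t * Rs t / (Rs t + Cs t + Ps t) = Ps t * Rs t / N :=
    fun t ht => by rw [hNs t ht]
  obtain ⟨B, hB⟩ : ∃ B : ℝ, ∀ x ∈ [1, |lam1|, |lam2|, u1max, u2max, Kb, Kg, KR, KC, KP], x ≤ B :=
    (List.finite_toSet _).bddAbove
  simp only [List.forall_mem_cons, List.not_mem_nil, false_imp_iff, implies_true, and_true] at hB
  obtain ⟨hB1, hBl1, hBl2, hBu1, hBu2, hBb, hBg, hBR, hBC, hBP⟩ := hB
  obtain ⟨p1, p2, p3, cp1, cp2, cp3, e1, e2, e3, hae⟩ := core (k1 := k1) hT hN0 hN.symm hB1 hBl1 hBl2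
    hBu1 hBu2 ha1 ha2 hk2 hk3 cB' cG' cR' cC' cP' mv1 mv2
    (fun t => (hKb t).trans hBb) (fun t => (hKg t).trans hBg) (fun t => (hKR t).trans hBR)
    (fun t => (hKC t).trans hBC) (fun t => (hKP t).trans hBP) rv1 rv2
    (fun t ht => by
      rw [xR t ht, eR t ht]
      refine congrArg _ (intervalIntegral.integral_congr fun s hs => ?_)
      have h := sub t ht hs
      simp only [xb s h, xg s h, xR s h, xC s h, xP s h, xv1 s h, xv2 s h]
      exact rhsR_eq _ _ _ _ _ _ _ _ _ _ _ _ _ (hQs s h))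
    (fun t ht => by
      rw [xC t ht, eC t ht]
      refine congrArg _ (intervalIntegral.integral_congr fun s hs => ?_)
      have h := sub t ht hs
      simp only [xb s h, xg s h, xR s h, xC s h, xP s h, xv1 s h, xv2 s h]
      exact rhsC_eq _ _ _ _ _ _ _ _ _ _ _ _ _ (hQs s h))
    (fun t ht => by
      rw [xP t ht, eP t ht]
      refine congrArg _ (intervalIntegral.integral_congr fun s hs => ?_)
      have h := sub t ht hs
      simp only [xb s h, xg s h, xR s h, xC s h, xP s h, xv1 s h, xv2 s h]
      exact rhsP_eq lam1 lam2 a1 a2 _ _ _ _ _ _ _ _ _ (hQs s h))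
    -- every competitor with constant total population is feasible for the original problem
    (by
      intro R C P v w kR kC kP mv mw rv rw' fR' fC' fP' hs
      have h0 : (0:ℝ) ∈ Icc 0 t_f := ⟨le_rfl, hT⟩
      have jR : R 0 = R0 := by rw [fR' 0 h0]; simp
      have jC : C 0 = C0 := by rw [fC' 0 h0]; simp
      have jP : P 0 = P0 := by rw [fP' 0 h0]; simp
      have hq : ∀ t ∈ Icc 0 t_f, P t * R t / (R t + C t + P t) = P t * R t / N :=
        fun t ht => by rw [hs t ht]
      have hle := hmin R C P v w ⟨mv, mw, fun t _ => rv t, fun t _ => rw' t,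
        ⟨kR.continuousOn, kC.continuousOn, kP.continuousOn, fun t ht => by
          rw [jR, fR' t ht]
          refine congrArg _ (intervalIntegral.integral_congr fun s hs => ?_)
          have h := sub t ht hs
          simp only [xb s h, xg s h]
          exact (rhsR_eq _ _ _ _ _ _ _ _ _ _ _ _ _ (hq s h)).symm, fun t ht => by
          rw [jC, fC' t ht]
          refine congrArg _ (intervalIntegral.integral_congr fun s hs => ?_)
          have h := sub t ht hs
          simp only [xb s h, xg s h]
          exact (rhsC_eq _ _ _ _ _ _ _ _ _ _ _ _ _ (hq s h)).symm, fun t ht => by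
          rw [jP, fP' t ht]
          refine congrArg _ (intervalIntegral.integral_congr fun s hs => ?_)
          have h := sub t ht hs
          simp only [xb s h, xg s h]
          exact (rhsP_eq lam1 lam2 a1 a2 _ _ _ _ _ _ _ _ _ (hq s h)).symm⟩, jR, jC, jP⟩
      refine le_trans (le_of_eq ?_) hle
      refine intervalIntegral.integral_congr fun s hs => ?_
      have h := sub t_f ⟨hT, le_rfl⟩ hs
      simp only [xP s h, xv1 s h, xv2 s h])
  refine ⟨p1, p2, p3, cp1.continuousOn, cp2.continuousOn, cp3.continuousOn, fun t ht => ?_,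
    fun t ht => ?_, fun t ht => ?_, ?_, ?_, ?_, ?_, ?_⟩
  · rw [e1 t ht]
    refine congrArg _ (intervalIntegral.integral_congr fun s hs => ?_)
    have h := sub' t ht hs
    simp only [adj1, xb s h, xg s h, xR s h, xC s h, xP s h, xv1 s h, xv2 s h, hNs s h]
    ring
  · rw [e2 t ht]
    refine congrArg _ (intervalIntegral.integral_congr fun s hs => ?_)
    have h := sub' t ht hs
    simp only [adj2, xb s h, xg s h, xR s h, xC s h, xP s h, xv1 s h, xv2 s h, hNs s h]
    ring
  · rw [e3 t ht]
    refine congrArg _ (intervalIntegral.integral_congr fun s hs => ?_)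
    have h := sub' t ht hs
    simp only [adj3, xb s h, xg s h, xR s h, xC s h, xP s h, xv1 s h, xv2 s h, hNs s h]
    ring
  · rw [e1 t_f ⟨hT, le_rfl⟩]; simp
  · rw [e2 t_f ⟨hT, le_rfl⟩]; simp
  · rw [e3 t_f ⟨hT, le_rfl⟩]; simp
  · filter_upwards [hae, ae_restrict_mem measurableSet_Icc] with t ht h
    rw [← xv1 t h, ← xP t h]
    exact ht.1
  · filter_upwards [hae, ae_restrict_mem measurableSet_Icc] with t ht h
    rw [hNs t h, ← xv2 t h, ← xP t h, ← xR t h, mul_comm (2 * k3) N, ← div_div]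
    exact ht.2
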